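/- arXiv:2301.05153 — 3 statements merged into one kernel-verified Lean document; each statement's English description precedes it below -/
import Mathlib

section
/- Fix ī ∈ {0,…,e−1} and let C be a core block. Then K_ī(C) ≤ d_ī(μ) for every multipartition μ lying in C. -/
/-!
Combinatorial framework for multipartitions, residues, β-sets, abacus levels,
weights, hubs, core blocks and Scopes-type moves, following Fayers and the paper.
Rows and columns of Young diagrams are indexed from 0, so the node in row `b`
and column `c` (0-based) of component `j` has residue `a j + c - b` mod `e`.
-/

open scoped Classical

namespace AK

/-- A partition, given by its (antitone, finitely supported) sequence of parts,
rows indexed from `0`. -/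
structure PartitionFun : Type where
  part : ℕ → ℕ
  antitone : Antitone part
  finite_support : ∃ N, ∀ b, N ≤ b → part b = 0

/-- The node in row `b`, column `c` (0-based) belongs to the Young diagram. -/
def PartitionFun.InDiag (lam : PartitionFun) (b c : ℕ) : Prop := c < lam.part b

/-- The node `(b,c)` is removable: deleting it leaves the diagram of a partition. -/
def PartitionFun.Removable (lam : PartitionFun) (b c : ℕ) : Prop :=
  lam.part b = c + 1 ∧ lam.part (b + 1) ≤ c

/-- The node `(b,c)` is addable: adjoining it gives the diagram of a partition. -/
def PartitionFun.Addable (lam : PartitionFun) (b c : ℕ) : Prop :=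
  lam.part b = c ∧ (b = 0 ∨ lam.part b < lam.part (b - 1))

/-- An `r`-multipartition. -/
abbrev Multipartition (r : ℕ) := Fin r → PartitionFun

/-- Nodes: `(b, c, j)` with row `b`, column `c`, component `j`. -/
abbrev Node (r : ℕ) := ℕ × ℕ × Fin r

/-- The Young diagram of a multipartition, as a set of nodes. -/
def diag {r : ℕ} (lam : Multipartition r) : Set (Node r) :=
  {x | (lam x.2.2).InDiag x.1 x.2.1}

/-- The size `n` of a multipartition of `n`. -/
noncomputable def msize {r : ℕ} (lam : Multipartition r) : ℕ :=
  Set.ncard (diag lam)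

/-- `c_i(λ)`: the number of nodes of residue `i` (mod `e`). -/
noncomputable def nodeCount {r : ℕ} (e : ℕ) (a : Fin r → ℤ) (lam : Multipartition r)
    (i : ℤ) : ℕ :=
  Set.ncard {x : Node r | (lam x.2.2).InDiag x.1 x.2.1 ∧
    (a x.2.2 + (x.2.1 : ℤ) - (x.1 : ℤ)) % (e : ℤ) = i % e}

/-- Number of removable nodes of residue `i` in component `j`. -/
noncomputable def removableCount {r : ℕ} (e : ℕ) (a : Fin r → ℤ) (lam : Multipartition r)
    (i : ℤ) (j : Fin r) : ℕ :=
  Set.ncard {p : ℕ × ℕ | (lam j).Removable p.1 p.2 ∧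
    (a j + (p.2 : ℤ) - (p.1 : ℤ)) % (e : ℤ) = i % e}

/-- Number of addable nodes of residue `i` in component `j`. -/
noncomputable def addableCount {r : ℕ} (e : ℕ) (a : Fin r → ℤ) (lam : Multipartition r)
    (i : ℤ) (j : Fin r) : ℕ :=
  Set.ncard {p : ℕ × ℕ | (lam j).Addable p.1 p.2 ∧
    (a j + (p.2 : ℤ) - (p.1 : ℤ)) % (e : ℤ) = i % e}

/-- `δ^j_i(λ)` = (removable `i`-nodes of component `j`) − (addable `i`-nodes of component `j`). -/
noncomputable def delta {r : ℕ} (e : ℕ) (a : Fin r → ℤ) (lam : Multipartition r)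
    (i : ℤ) (j : Fin r) : ℤ :=
  (removableCount e a lam i j : ℤ) - (addableCount e a lam i j : ℤ)

/-- The hub `δ_i(λ) = Σ_j δ^j_i(λ)`. -/
noncomputable def hub {r : ℕ} (e : ℕ) (a : Fin r → ℤ) (lam : Multipartition r) (i : ℤ) : ℤ :=
  ∑ j : Fin r, delta e a lam i j

/-- Two multipartitions have the same hub. -/
def SameHub {r : ℕ} (e : ℕ) (a : Fin r → ℤ) (lam mu : Multipartition r) : Prop :=
  ∀ i : ℤ, hub e a lam i = hub e a mu i

/-- `d_i(m) = min { δ^j_i(m) : 1 ≤ j ≤ r }`. -/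
noncomputable def dmin {r : ℕ} (e : ℕ) (a : Fin r → ℤ) (lam : Multipartition r) (i : ℤ) : ℤ :=
  sInf {x : ℤ | ∃ j : Fin r, delta e a lam i j = x}

/-- The weight `w(λ) = Σ_j c_{a_j}(λ) − (1/2) Σ_{i∈ℤ/eℤ} (c_i(λ) − c_{i+1}(λ))²`. -/
noncomputable def weight {r : ℕ} (e : ℕ) (a : Fin r → ℤ) (lam : Multipartition r) : ℚ :=
  (∑ j : Fin r, (nodeCount e a lam (a j) : ℚ)) -
    (1 / 2 : ℚ) * ∑ i ∈ Finset.range e,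
      ((nodeCount e a lam (i : ℤ) : ℚ) - (nodeCount e a lam ((i : ℤ) + 1) : ℚ)) ^ 2

/-- The β-set `B^j = {λ_b + a_j − b : b ≥ 1}` (here with rows indexed from 0). -/
def betaSet (aj : ℤ) (lam : PartitionFun) : Set ℤ :=
  {x | ∃ b : ℕ, x = (lam.part b : ℤ) + aj - ((b : ℤ) + 1)}

/-- A partition is an `e`-core: `β ∈ B` implies `β − e ∈ B`. -/
def IsECore (e : ℕ) (aj : ℤ) (lam : PartitionFun) : Prop :=
  ∀ x ∈ betaSet aj lam, x - (e : ℤ) ∈ betaSet aj lam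

/-- A multicore: all components are `e`-cores. -/
def IsMulticore {r : ℕ} (e : ℕ) (a : Fin r → ℤ) (lam : Multipartition r) : Prop :=
  ∀ j, IsECore e (a j) (lam j)

/-- `ℓ^a_{ij}(λ)`: the level of the lowest bead on runner `i`, i.e. the largest `x`
with `x·e + i` in the β-set. -/
noncomputable def level (e : ℕ) (aj : ℤ) (lam : PartitionFun) (i : ℕ) : ℤ :=
  sSup {x : ℤ | x * (e : ℤ) + (i : ℤ) ∈ betaSet aj lam}

/-- `γ^{jk}_i(λ) = ℓ^a_{ij}(λ) − ℓ^a_{ik}(λ)`. -/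
noncomputable def gamma {r : ℕ} (e : ℕ) (a : Fin r → ℤ) (lam : Multipartition r)
    (i : ℕ) (j k : Fin r) : ℤ :=
  level e (a j) (lam j) i - level e (a k) (lam k) i

/-- `γ^{jk}_{il}(λ) = γ^{jk}_i(λ) − γ^{jk}_l(λ)`. -/
noncomputable def gammaD {r : ℕ} (e : ℕ) (a : Fin r → ℤ) (lam : Multipartition r)
    (i l : ℕ) (j k : Fin r) : ℤ :=
  gamma e a lam i j k - gamma e a lam l j k

/-- Move a bead from runner `i` to runner `l` in the β-set `S`: replace the largest
element of `S` congruent to `i` mod `e` by the smallest integer congruent to `l`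
mod `e` not in `S`. -/
noncomputable def moveBead (e : ℕ) (i l : ℕ) (S : Set ℤ) : Set ℤ :=
  insert (sInf {x : ℤ | x % (e : ℤ) = (l : ℤ) % e ∧ x ∉ S})
    (S \ {sSup {x : ℤ | x % (e : ℤ) = (i : ℤ) % e ∧ x ∈ S}})

/-- The effect of `s^{jk}_{il}` on the tuple of β-sets: move a bead from runner `i`
to runner `l` in component `j`, and from runner `l` to runner `i` in component `k`. -/
noncomputable def swapSets {r : ℕ} (e i l : ℕ) (j k : Fin r) (S : Fin r → Set ℤ) :
    Fin r → Set ℤ :=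
  Function.update (Function.update S j (moveBead e i l (S j))) k
    (moveBead e l i (Function.update S j (moveBead e i l (S j)) k))

/-- `m' = s^{jk}_{il}(m)`, expressed via β-sets. -/
def IsSwap {r : ℕ} (e : ℕ) (a : Fin r → ℤ) (i l : ℕ) (j k : Fin r)
    (m m' : Multipartition r) : Prop :=
  ∀ j', betaSet (a j') (m' j') = swapSets e i l j k (fun t => betaSet (a t) (m t)) j'

/-- `λ` lies in a core block: its weight is minimal among the weights of all
multipartitions with the same hub. -/
def MinimalWeight {r : ℕ} (e : ℕ) (a : Fin r → ℤ) (lam : Multipartition r) : Prop :=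
  ∀ mu : Multipartition r, SameHub e a lam mu → weight e a lam ≤ weight e a mu

/-- `(b_0,…,b_{e−1})` is a base tuple for `mu` with respect to the multicharge `a'`
(congruent to `a` componentwise mod `e`): each `ℓ^{a'}_{ij}(mu)` is `b i` or `b i + 1`. -/
def IsBaseTuple {r : ℕ} (e : ℕ) (a : Fin r → ℤ) (mu : Multipartition r)
    (a' : Fin r → ℤ) (b : ℕ → ℤ) : Prop :=
  (∀ j, (e : ℤ) ∣ (a' j - a j)) ∧
    ∀ i < e, ∀ j, level e (a' j) (mu j) i = b i ∨ level e (a' j) (mu j) i = b i + 1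

/-- `K_i(C)` for the core block of `mu`: among all base tuples (over all admissible
multicharges), take `b i` maximal and then `b (i−1)` minimal, and set
`K_i = b_i − b_{i−1} − 1` for `i ≠ 0`, `K_0 = b_0 − b_{e−1} − 2`. -/
noncomputable def Kconst {r : ℕ} (e : ℕ) (a : Fin r → ℤ) (mu : Multipartition r)
    (i : ℕ) : ℤ :=
  let Bi : ℤ := sSup {x : ℤ | ∃ a' bt, IsBaseTuple e a mu a' bt ∧ bt i = x}
  let iprev : ℕ := if i = 0 then e - 1 else i - 1
  let Bp : ℤ := sInf {x : ℤ | ∃ a' bt, IsBaseTuple e a mu a' bt ∧ bt i = Bi ∧ bt iprev = x}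
  Bi - Bp - (if i = 0 then 2 else 1)

/-- The map `φ_i : ℤ → ℤ`. -/
def phiMap (e i : ℕ) (x : ℤ) : ℤ :=
  if x % (e : ℤ) = ((i : ℤ) - 1) % e then x + 1
  else if x % (e : ℤ) = (i : ℤ) % e then x - 1
  else x

/-- Lexicographic order on multipartitions: `λ > μ`. -/
def lexGT {r : ℕ} (lam mu : Multipartition r) : Prop :=
  ∃ j : Fin r, (∀ j' < j, (lam j').part = (mu j').part) ∧
    ∃ i : ℕ, (∀ i' < i, (lam j).part i' = (mu j).part i') ∧
      (mu j).part i < (lam j).part i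

/-- `x` is above `y`: `j < j'` or (`j = j'` and `b < b'`). -/
def NodeAbove {r : ℕ} (x y : Node r) : Prop :=
  x.2.2 < y.2.2 ∨ (x.2.2 = y.2.2 ∧ x.1 < y.1)

/-- The order on nodes: `x < y` iff `y` is above `x`. -/
def NodeLT {r : ℕ} (x y : Node r) : Prop := NodeAbove y x

/-- `N_A(λ)` = (addable `i`-nodes of `λ` below `A`) − (removable `i`-nodes of `λ` below `A`). -/
noncomputable def Nfac {r : ℕ} (e : ℕ) (a : Fin r → ℤ) (lam : Multipartition r)
    (i : ℤ) (A : Node r) : ℤ :=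
  (Set.ncard {y : Node r | (lam y.2.2).Addable y.1 y.2.1 ∧
      (a y.2.2 + (y.2.1 : ℤ) - (y.1 : ℤ)) % (e : ℤ) = i % e ∧ NodeAbove A y} : ℤ) -
  (Set.ncard {y : Node r | (lam y.2.2).Removable y.1 y.2.1 ∧
      (a y.2.2 + (y.2.1 : ℤ) - (y.1 : ℤ)) % (e : ℤ) = i % e ∧ NodeAbove A y} : ℤ)

/-- `lam` is obtained from `mu` by adding one `e`-rim hook to some component:
on β-sets, some `β ∈ B^j` with `β + e ∉ B^j` is replaced by `β + e`. -/
def AddRimHook {r : ℕ} (e : ℕ) (a : Fin r → ℤ) (mu lam : Multipartition r) : Prop :=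
  ∃ (j : Fin r) (β : ℤ), β ∈ betaSet (a j) (mu j) ∧ β + (e : ℤ) ∉ betaSet (a j) (mu j) ∧
    betaSet (a j) (lam j) = insert (β + (e : ℤ)) (betaSet (a j) (mu j) \ {β}) ∧
    ∀ j' ≠ j, betaSet (a j') (lam j') = betaSet (a j') (mu j')

/-- The number of inversions (length) of a permutation of `Fin d`. -/
noncomputable def permLength (d : ℕ) (σ : Equiv.Perm (Fin d)) : ℕ :=
  (Finset.univ.filter (fun p : Fin d × Fin d => p.1 < p.2 ∧ σ p.2 < σ p.1)).card


def pW {V : Type*} (c : V → V → ℤ) : List V → ℤ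
  | [] => 0
  | [_] => 0
  | x :: y :: l => c x y + pW c (y :: l)

lemma pW_append {V : Type*} (c : V → V → ℤ) (A B : List V) (x : V) :
    pW c (A ++ x :: B) = pW c (A ++ [x]) + pW c (x :: B) := by
  induction A with
  | nil => simp [pW]
  | cons y A ih =>
    cases A with
    | nil => simp [pW]
    | cons z A => simp only [List.cons_append, pW] at ih ⊢; rw [ih]; ring

lemma pW_zip {V : Type*} (c : V → V → ℤ) (l : List V) (x z : V) :
    pW c (x :: l ++ [z]) = (List.zipWith c (x :: l) (l ++ [z])).sum := by
  induction l generalizing x with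
  | nil => simp [pW]
  | cons y l ih => simp only [List.cons_append, pW, List.zipWith_cons_cons, List.sum_cons] at ih ⊢
                   rw [ih]

lemma pW_cycle {V : Type*} [Fintype V] [DecidableEq V] (c : V → V → ℤ) (hc : ∀ j, c j j = 0)
    (x : V) (l : List V) (hn : (x :: l).Nodup) :
    pW c (x :: l ++ [x]) = ∑ j, c j ((x :: l).formPerm j) := by
  rw [pW_zip]
  have h1 : ∑ j, c j ((x :: l).formPerm j) = ∑ j ∈ (x :: l).toFinset, c j ((x :: l).formPerm j) := by
    symm
    apply Finset.sum_subset (Finset.subset_univ _)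
    intro j _ hj
    rw [List.formPerm_apply_of_notMem (by simpa using hj), hc]
  rw [h1, List.sum_toFinset _ hn]
  congr 1
  have h2 : l ++ [x] = (x :: l).map (x :: l).formPerm := by
    apply List.ext_getElem
    · simp
    · intro i h1 h2
      rw [List.getElem_map, List.formPerm_apply_getElem _ hn]
      have : l ++ [x] = (x :: l).rotate 1 := by simp
      simp only [this, List.getElem_rotate]
  rw [h2, List.zipWith_map_right, List.zipWith_self]

lemma potentials {V : Type*} [Fintype V] [DecidableEq V] (c : V → V → ℤ) (hc : ∀ j, c j j = 0)
    (h : ∀ σ : Equiv.Perm V, 0 ≤ ∑ j, c j (σ j)) :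
    ∃ u : V → ℤ, ∀ j k, u j - u k ≤ c j k := by
  have hfin : ∀ j : V, ({l : List V | (j :: l).Nodup}).Finite := by
    intro j
    have := (List.finite_length_le V (Fintype.card V))
    refine this.subset ?_
    intro l hl
    have := hl.length_le_card
    simp at this ⊢
    omega
  have hmin : ∀ j : V, ∃ l : List V, (j :: l).Nodup ∧ ∀ l', (j :: l').Nodup →
      pW c (j :: l) ≤ pW c (j :: l') := by
    intro j
    obtain ⟨l, hl, hl'⟩ := Set.exists_min_image _ (fun l => pW c (j :: l)) (hfin j) ⟨[], by simp⟩
    exact ⟨l, hl, hl'⟩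
  choose L hL hLm using hmin
  refine ⟨fun j => pW c (j :: L j), fun j k => ?_⟩
  by_cases hjk : j = k
  · subst hjk; simp [hc]
  by_cases hm : j ∈ k :: L k
  · obtain ⟨A, B, hAB⟩ := List.append_of_mem hm
    have hnd := hL k
    rw [hAB] at hnd
    have h3 : pW c (j :: k :: L k) = pW c (j :: A ++ [j]) + pW c (j :: B) := by
      rw [hAB, ← pW_append]; rfl
    have h4 : (j :: A).Nodup := by
      have := List.nodup_append.1 hnd
      rw [List.nodup_cons]
      refine ⟨fun hh => ?_, this.1⟩
      exact this.2.2 j hh j (by simp) rfl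
    have h5 : (j :: B).Nodup := (List.nodup_append.1 hnd).2.1
    have h6 := hLm j B h5
    have h7 := h (j :: A).formPerm
    rw [← pW_cycle c hc j A h4] at h7
    simp only [pW] at h3
    simp only
    linarith
  · have := hLm j (k :: L k) (List.nodup_cons.2 ⟨hm, hL k⟩)
    simp only [pW] at this
    simp only
    linarith


/-- beta numbers -/
def be (a : ℤ) (lam : PartitionFun) (b : ℕ) : ℤ := (lam.part b : ℤ) + a - ((b : ℤ) + 1)

def Mo (e : ℕ) (a : ℤ) (K : ℕ) : ℕ := (a + K * e).toNat

structure Adm (e : ℕ) (a : ℤ) (lam : PartitionFun) (K : ℕ) : Prop where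
  pos : 1 ≤ a + K * e
  zero : ∀ b : ℕ, a + K * e ≤ b + 1 → lam.part b = 0

lemma Adm.mono {e : ℕ} {a : ℤ} {lam : PartitionFun} {K K' : ℕ} (h : Adm e a lam K) (hK : K ≤ K') :
    Adm e a lam K' := by
  have : (K : ℤ) * e ≤ K' * e := by exact_mod_cast Nat.mul_le_mul_right e hK
  exact ⟨by linarith [h.pos], fun b hb => h.zero b (by linarith)⟩

lemma Adm.Mo_cast {e : ℕ} {a : ℤ} {lam : PartitionFun} {K : ℕ} (h : Adm e a lam K) :
    (Mo e a K : ℤ) = a + K * e := by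
  have := h.pos
  unfold Mo; omega

lemma exists_adm (e : ℕ) (he : 2 ≤ e) (a : ℤ) (lam : PartitionFun) : ∃ K, Adm e a lam K := by
  obtain ⟨N, hN⟩ := lam.finite_support
  refine ⟨N + a.natAbs + 1, ?_, ?_⟩
  · push_cast
    have : |a| ≥ -a := neg_le_abs a
    nlinarith [abs_nonneg a]
  · intro b hb
    apply hN
    push_cast at hb
    have : |a| ≥ -a := neg_le_abs a
    have : (N : ℤ) ≤ b := by nlinarith [abs_nonneg a]
    exact_mod_cast this

lemma exists_adm_multi {r : ℕ} (e : ℕ) (he : 2 ≤ e) (a : Fin r → ℤ) (lam : Multipartition r) :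
    ∃ K, ∀ K' ≥ K, ∀ j, Adm e (a j) (lam j) K' := by
  choose K hK using fun j => exists_adm e he (a j) (lam j)
  refine ⟨∑ j, K j, fun K' hK' j => (hK j).mono ?_⟩
  exact le_trans (Finset.single_le_sum (fun _ _ => Nat.zero_le _) (Finset.mem_univ j)) hK'

lemma be_strictAnti (a : ℤ) (lam : PartitionFun) : StrictAnti (be a lam) := by
  intro b c h
  have := lam.antitone h.le
  unfold be; omega

/-- number of beads on runner `i` -/
def nn (e : ℕ) (a : ℤ) (lam : PartitionFun) (K : ℕ) (i : ℤ) : ℤ :=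
  ∑ b ∈ Finset.range (Mo e a K), if be a lam b % e = i % e then 1 else 0

def EE (e : ℕ) (a : ℤ) (lam : PartitionFun) (K : ℕ) : ℤ :=
  ∑ b ∈ Finset.range (Mo e a K), be a lam b / e

lemma floor_step (e : ℕ) (he : 2 ≤ e) (x i : ℤ) :
    (x - i) / e - (x - i - 1) / e = if x % e = i % e then 1 else 0 := by
  have he' : (0 : ℤ) < e := by omega
  split_ifs with h
  · obtain ⟨q, hq⟩ := Int.ModEq.dvd (show i ≡ x [ZMOD e] from h.symm)
    rw [hq, Int.mul_ediv_cancel_left _ he'.ne']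
    have : ((e : ℤ) * q - 1) / e = q - 1 := by
      rw [Int.ediv_eq_iff_of_pos he']
      constructor <;> nlinarith
    omega
  · have h1 := Int.emod_add_mul_ediv (x - i) e
    have h2 := Int.emod_nonneg (x - i) he'.ne'
    have h3 := Int.emod_lt_of_pos (x - i) he'
    have h4 : (x - i) % e ≠ 0 := by
      intro h5
      apply h
      exact Int.emod_eq_emod_iff_emod_sub_eq_zero.2 h5
    have : (x - i - 1) / e = (x - i) / e := by
      rw [Int.ediv_eq_iff_of_pos he']
      constructor <;> nlinarith [lt_of_le_of_ne h2 (Ne.symm h4)]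
    omega

lemma row_count (e : ℕ) (he : 2 ≤ e) (z i : ℤ) (p : ℕ) :
    (∑ c ∈ Finset.range p, if (z + (c : ℤ)) % (e : ℤ) = i % e then (1 : ℤ) else 0) =
      (z + p - 1 - i) / e - (z - 1 - i) / e := by
  induction p with
  | zero => simp
  | succ p ih =>
    rw [Finset.sum_range_succ, ih, ← floor_step e he]
    push_cast
    rw [show z + p - i - 1 = z + p - 1 - i by ring, show z + (p + 1 : ℤ) - 1 - i = z + p - i by ring]
    ring

lemma nodeCount_eq {r : ℕ} (e : ℕ) (he : 2 ≤ e) (a : Fin r → ℤ) (lam : Multipartition r)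
    (K : ℕ) (hK : ∀ j, Adm e (a j) (lam j) K) (i : ℤ) :
    (nodeCount e a lam i : ℤ) = ∑ j, ∑ b ∈ Finset.range (Mo e (a j) K),
      ((be (a j) (lam j) b - i) / e - (a j - b - 1 - i) / e) := by
  have hM : ∀ j b, (lam j).part b ≠ 0 → b < Mo e (a j) K := by
    intro j b hb
    by_contra hlt
    apply hb
    apply (hK j).zero
    have := (hK j).Mo_cast
    omega
  have hset : {x : Node r | (lam x.2.2).InDiag x.1 x.2.1 ∧
    (a x.2.2 + (x.2.1 : ℤ) - (x.1 : ℤ)) % (e : ℤ) = i % e} =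
    (((Finset.univ : Finset (Fin r)).biUnion fun j => (Finset.range (Mo e (a j) K)).biUnion fun b =>
      ((Finset.range ((lam j).part b)).filter
        (fun c : ℕ => (a j - (b : ℤ) + (c : ℤ)) % (e : ℤ) = i % e)).image
        (fun c => ((b, c, j) : Node r)) : Finset (Node r)) : Set (Node r)) := by
    ext ⟨b, c, j⟩
    simp only [PartitionFun.InDiag, Set.mem_ofPred_eq, Finset.coe_biUnion, Finset.mem_coe,
      Finset.mem_univ, Set.iUnion_true, Set.mem_iUnion, Finset.mem_image, Finset.mem_filter,
      Finset.mem_range, Prod.mk.injEq, exists_prop]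
    have hz : a j + (c : ℤ) - b = a j - b + c := by ring
    constructor
    · rintro ⟨h1, h2⟩
      exact ⟨j, b, hM j b (by omega), c, ⟨h1, by rw [← hz]; exact h2⟩, rfl, rfl, rfl⟩
    · rintro ⟨j', b', h, c', ⟨h1, h2⟩, rfl, rfl, rfl⟩
      exact ⟨h1, by rw [hz]; exact h2⟩
  unfold nodeCount
  rw [hset, Set.ncard_coe_finset, Finset.card_biUnion]
  · push_cast
    refine Finset.sum_congr rfl fun j _ => ?_
    rw [Finset.card_biUnion]
    · push_cast
      refine Finset.sum_congr rfl fun b _ => ?_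
      rw [Finset.card_image_of_injective _ (fun c c' h => by simpa using h), Finset.card_filter]
      push_cast
      rw [row_count e he]
      unfold be
      congr 2 <;> ring
    · intro b _ b' _ hb
      rw [Function.onFun, Finset.disjoint_left]
      simp only [Finset.mem_image]
      rintro x ⟨c, _, rfl⟩ ⟨c', _, h⟩
      simp at h; exact hb h.1.symm
  · intro j _ j' _ hj
    rw [Function.onFun, Finset.disjoint_left]
    simp only [Finset.mem_biUnion, Finset.mem_image]
    rintro x ⟨b, _, c, _, rfl⟩ ⟨b', _, c', _, h⟩
    simp at h; exact hj h.2.2.symm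

lemma removable_eq {r : ℕ} (e : ℕ) (a : Fin r → ℤ) (lam : Multipartition r)
    (K : ℕ) (i : ℤ) (j : Fin r) (hK : Adm e (a j) (lam j) K) :
    (removableCount e a lam i j : ℤ) = ∑ b ∈ Finset.range (Mo e (a j) K),
      ((if be (a j) (lam j) b % e = i % e then 1 else 0) -
        if be (a j) (lam j) b % e = i % e ∧ be (a j) (lam j) (b+1) = be (a j) (lam j) b - 1 
        then 1 else 0) := by
  have hset : {p : ℕ × ℕ | (lam j).Removable p.1 p.2 ∧
    (a j + (p.2 : ℤ) - (p.1 : ℤ)) % (e : ℤ) = i % e} =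
    (((Finset.range (Mo e (a j) K)).filter (fun b => be (a j) (lam j) b % e = i % e ∧
      ¬ be (a j) (lam j) (b+1) = be (a j) (lam j) b - 1)).image
        (fun b => (b, (lam j).part b - 1)) : Finset (ℕ × ℕ)) := by
    ext ⟨b, c⟩
    simp only [PartitionFun.Removable, Set.mem_ofPred_eq, Finset.mem_coe, Finset.mem_image,
      Finset.mem_filter, Finset.mem_range, Prod.mk.injEq]
    have hb1 := hK.Mo_cast
    have han := (lam j).antitone (Nat.le_succ b)
    constructor
    · rintro ⟨⟨h1, h2⟩, h3⟩
      refine ⟨b, ⟨?_, ?_, ?_⟩, rfl, by omega⟩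
      · by_contra hlt
        have := hK.zero b (by omega)
        omega
      · rw [← h3]; unfold be; rw [h1]; push_cast; congr 1; ring
      · unfold be; push_cast; simp at han; omega
    · rintro ⟨b', ⟨h1, h2, h3⟩, rfl, h5⟩
      have h6 : (lam j).part b' ≠ (lam j).part (b' + 1) := by
        intro h; apply h3; unfold be; rw [h]; push_cast; ring
      simp at han
      have h7 : (lam j).part b' = c + 1 := by omega
      refine ⟨⟨h7, by omega⟩, ?_⟩
      rw [← h2]; unfold be; rw [h7]; push_cast; congr 1; ring
  unfold removableCount
  rw [hset, Set.ncard_coe_finset, Finset.card_image_of_injective _ (fun c c' h => by simp at h; exact h.1),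
    Finset.card_filter]
  push_cast
  refine Finset.sum_congr rfl fun b _ => ?_
  split_ifs <;> simp_all

lemma addable_eq {r : ℕ} (e : ℕ) (a : Fin r → ℤ) (lam : Multipartition r)
    (K : ℕ) (i : ℤ) (j : Fin r) (hK : Adm e (a j) (lam j) K) :
    (addableCount e a lam i j : ℤ) = ∑ b ∈ Finset.range (Mo e (a j) K),
      ((if be (a j) (lam j) b % e = (i - 1) % e then 1 else 0) -
        if be (a j) (lam j) b % e = (i - 1) % e ∧ b ≠ 0 ∧ be (a j) (lam j) (b-1) = be (a j) (lam j) b + 1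
        then 1 else 0) := by
  have hres : ∀ x : ℤ, x % e = i % e ↔ (x - 1) % e = (i - 1) % e := by
    intro x
    constructor
    · intro h; exact Int.ModEq.sub_right 1 h
    · intro h; have := Int.ModEq.add_right 1 (show x - 1 ≡ i - 1 [ZMOD e] from h)
      simp only [sub_add_cancel] at this; exact this
  have hset : {p : ℕ × ℕ | (lam j).Addable p.1 p.2 ∧
    (a j + (p.2 : ℤ) - (p.1 : ℤ)) % (e : ℤ) = i % e} =
    (((Finset.range (Mo e (a j) K)).filter (fun b => be (a j) (lam j) b % e = (i - 1) % e ∧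
      ¬ (b ≠ 0 ∧ be (a j) (lam j) (b-1) = be (a j) (lam j) b + 1))).image
        (fun b => (b, (lam j).part b)) : Finset (ℕ × ℕ)) := by
    ext ⟨b, c⟩
    simp only [PartitionFun.Addable, Set.mem_ofPred_eq, Finset.mem_coe, Finset.mem_image,
      Finset.mem_filter, Finset.mem_range, Prod.mk.injEq]
    have hb1 := hK.Mo_cast
    have hpos := hK.pos
    have han := (lam j).antitone (Nat.sub_le b 1)
    have hbe : ((b = 0 ∨ (lam j).part b < (lam j).part (b - 1)) ↔
        ¬ (b ≠ 0 ∧ be (a j) (lam j) (b-1) = be (a j) (lam j) b + 1)) := by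
      rcases Nat.eq_zero_or_pos b with rfl | hb
      · simp
      · unfold be; push_cast [Nat.cast_sub hb]; omega
    rw [hbe, hres]
    constructor
    · rintro ⟨⟨h1, h2⟩, h3⟩
      refine ⟨b, ⟨?_, ?_, h2⟩, rfl, h1⟩
      · by_contra hlt
        have h5 := hK.zero b (by omega)
        have h6 := hK.zero (b - 1) (by omega)
        rw [← hbe] at h2
        omega
      · rw [← h3]; unfold be; rw [h1]; congr 1; ring
    · rintro ⟨b', ⟨h1, h2, h3⟩, rfl, h5⟩
      refine ⟨⟨h5, h3⟩, ?_⟩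
      rw [← h2]; unfold be; rw [h5]; congr 1; ring
  unfold addableCount
  rw [hset, Set.ncard_coe_finset, Finset.card_image_of_injective _ (fun c c' h => by simp at h; exact h.1),
    Finset.card_filter]
  push_cast
  refine Finset.sum_congr rfl fun b _ => ?_
  split_ifs <;> simp_all

lemma delta_eq {r : ℕ} (e : ℕ) (a : Fin r → ℤ) (lam : Multipartition r)
    (K : ℕ) (i : ℤ) (j : Fin r) (hK : Adm e (a j) (lam j) K) :
    delta e a lam i j = nn e (a j) (lam j) K i - nn e (a j) (lam j) K (i - 1) -
      if i % e = 0 then 1 else 0 := by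
  unfold delta
  rw [removable_eq e a lam K i j hK, addable_eq e a lam K i j hK, Finset.sum_sub_distrib,
    Finset.sum_sub_distrib]
  unfold nn
  set P : ℕ → ℤ := fun b => if be (a j) (lam j) b % e = (i - 1) % e ∧ b ≠ 0 ∧ be (a j) (lam j) (b-1) = be (a j) (lam j) b + 1
        then 1 else 0 with hP
  have hres : ∀ x : ℤ, x % e = i % e ↔ (x - 1) % e = (i - 1) % e := by
    intro x
    constructor
    · intro h; exact Int.ModEq.sub_right 1 h
    · intro h; have := Int.ModEq.add_right 1 (show x - 1 ≡ i - 1 [ZMOD e] from h)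
      simp only [sub_add_cancel] at this; exact this
  have h1 : ∀ b, (if be (a j) (lam j) b % e = i % e ∧ be (a j) (lam j) (b+1) = be (a j) (lam j) b - 1 
        then (1:ℤ) else 0) = P (b + 1) := by
    intro b
    simp only [hP]
    congr 1
    simp only [Nat.add_sub_cancel, eq_iff_iff]
    constructor
    · rintro ⟨h1, h2⟩
      rw [hres, ← h2] at h1
      exact ⟨h1, by omega, by omega⟩
    · rintro ⟨h1, _, h2⟩
      refine ⟨?_, by omega⟩
      rw [hres, h2]; simpa using h1
  simp only [h1]
  have h2 := Finset.sum_range_sub P (Mo e (a j) K)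
  rw [Finset.sum_sub_distrib] at h2
  have h3 : P 0 = 0 := by simp [hP]
  have h4 : P (Mo e (a j) K) = if i % e = 0 then 1 else 0 := by
    have hc := hK.Mo_cast
    have hpos := hK.pos
    have e1 : be (a j) (lam j) (Mo e (a j) K) = - K * e - 1 := by
      unfold be; rw [hK.zero _ (by omega), hc]; push_cast; ring
    have e2 : be (a j) (lam j) (Mo e (a j) K - 1) = - K * e := by
      unfold be; rw [hK.zero _ (by omega), Nat.cast_sub (by omega), hc]; push_cast; ring
    simp only [hP, e1, e2]
    congr 1
    rw [← hres]
    simp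
    have : Mo e (a j) K ≠ 0 := by omega
    simp only [this, not_false_eq_true, and_true]
    rw [eq_comm]; exact ⟨Int.dvd_of_emod_eq_zero, Int.emod_eq_zero_of_dvd⟩
  linarith

lemma sum_decomp (e : ℕ) (he : 2 ≤ e) (a : ℤ) (lam : PartitionFun) (K : ℕ) (h : ℤ → ℤ) :
    ∑ b ∈ Finset.range (Mo e a K), h (be a lam b % e) =
      ∑ i ∈ Finset.range e, nn e a lam K i * h i := by
  unfold nn
  simp only [Finset.sum_mul]
  rw [Finset.sum_comm]
  refine Finset.sum_congr rfl fun b _ => ?_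
  have he' : (0 : ℤ) < e := by omega
  have h2 := Int.emod_nonneg (be a lam b) he'.ne'
  have h3 := Int.emod_lt_of_pos (be a lam b) he'
  rw [Finset.sum_eq_single (be a lam b % e).toNat]
  · rw [Int.toNat_of_nonneg h2]; simp
  · intro i hi hne
    rw [if_neg, zero_mul]
    intro heq
    rw [Int.emod_eq_of_lt (a := (i : ℤ)) (by omega) (by simp at hi; omega)] at heq
    omega
  · intro hh; simp at hh; omega

lemma sum_nn (e : ℕ) (he : 2 ≤ e) (a : ℤ) (lam : PartitionFun) (K : ℕ) :
    ∑ i ∈ Finset.range e, nn e a lam K i = Mo e a K := by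
  have := sum_decomp e he a lam K (fun _ => 1)
  simp at this; exact this.symm

lemma nn_congr (e : ℕ) (a : ℤ) (lam : PartitionFun) (K : ℕ) (i i' : ℤ) (h : i % e = i' % e) :
    nn e a lam K i = nn e a lam K i' := by
  unfold nn; rw [h]

lemma sameHub_iff {r : ℕ} (e : ℕ) (he : 2 ≤ e) (a : Fin r → ℤ) (lam mu : Multipartition r)
    (K : ℕ) (hl : ∀ j, Adm e (a j) (lam j) K) (hm : ∀ j, Adm e (a j) (mu j) K) :
    SameHub e a lam mu ↔
      ∀ i : ℤ, ∑ j, nn e (a j) (lam j) K i = ∑ j, nn e (a j) (mu j) K i := by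
  have key : ∀ i, hub e a lam i = hub e a mu i ↔ 
      (∑ j, nn e (a j) (lam j) K i - ∑ j, nn e (a j) (mu j) K i) = 
      (∑ j, nn e (a j) (lam j) K (i-1) - ∑ j, nn e (a j) (mu j) K (i-1)) := by
    intro i
    unfold hub
    rw [Finset.sum_congr rfl fun j _ => delta_eq e a lam K i j (hl j),
      Finset.sum_congr rfl fun j _ => delta_eq e a mu K i j (hm j)]
    simp only [Finset.sum_sub_distrib]
    constructor <;> intro h <;> linarith
  constructor
  · intro h
    set D : ℤ → ℤ := fun i => ∑ j, nn e (a j) (lam j) K i - ∑ j, nn e (a j) (mu j) K i with hD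
    have h1 : ∀ i, D i = D (i - 1) := fun i => (key i).1 (h i)
    have h2 : ∀ i, D i = D 0 := by
      intro i
      induction i using Int.induction_on with
      | zero => rfl
      | succ n ih => rw [h1]; simpa using ih
      | pred n ih => rw [← h1]; exact ih
    have h3 : ∑ i ∈ Finset.range e, D i = 0 := by
      simp only [hD, Finset.sum_sub_distrib]
      rw [Finset.sum_comm, Finset.sum_comm (s := Finset.range e)]
      simp only [sum_nn e he]; simp
    simp only [fun i : ℕ => h2 (i : ℤ), Finset.sum_const, Finset.card_range, smul_eq_mul,
      nsmul_eq_mul, mul_eq_zero] at h3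
    intro i
    have h4 := h2 i
    have : D 0 = 0 := by rcases h3 with h3 | h3 <;> omega
    simp only [hD] at h4 this
    omega
  · intro h i
    rw [key, h, h]; simp

lemma nodeCount_diff {r : ℕ} (e : ℕ) (he : 2 ≤ e) (a : Fin r → ℤ) (lam : Multipartition r)
    (K : ℕ) (hK : ∀ j, Adm e (a j) (lam j) K) (i : ℤ) :
    (nodeCount e a lam i : ℤ) - nodeCount e a lam (i + 1) =
     ∑ j, nn e (a j) (lam j) K i - ∑ j, ∑ b ∈ Finset.range (Mo e (a j) K),
      ((a j - b - 1 - i) / e - (a j - b - 1 - (i + 1)) / e) := by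
  rw [nodeCount_eq e he a lam K hK, nodeCount_eq e he a lam K hK, ← Finset.sum_sub_distrib,
    ← Finset.sum_sub_distrib]
  refine Finset.sum_congr rfl fun j _ => ?_
  unfold nn
  rw [← Finset.sum_sub_distrib, ← Finset.sum_sub_distrib]
  refine Finset.sum_congr rfl fun b _ => ?_
  rw [← floor_step e he]
  simp only [sub_add_eq_sub_sub]
  ring

lemma weight_diff {r : ℕ} (e : ℕ) (he : 2 ≤ e) (a : Fin r → ℤ) (lam mu : Multipartition r)
    (K : ℕ) (hl : ∀ j, Adm e (a j) (lam j) K) (hm : ∀ j, Adm e (a j) (mu j) K)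
    (h : ∀ i : ℤ, ∑ j, nn e (a j) (lam j) K i = ∑ j, nn e (a j) (mu j) K i) :
    weight e a lam - weight e a mu =
      (r : ℚ) * ((∑ j, EE e (a j) (lam j) K - ∑ j, EE e (a j) (mu j) K : ℤ) : ℚ) := by
  have h1 : ∀ i : ℤ, ((nodeCount e a lam i : ℚ) - nodeCount e a lam (i + 1)) =
      ((nodeCount e a mu i : ℚ) - nodeCount e a mu (i + 1)) := by
    intro i
    have := (nodeCount_diff e he a lam K hl i).trans
      ((h i ▸ rfl : _ = _).trans (nodeCount_diff e he a mu K hm i).symm)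
    exact_mod_cast this
  have h2 : ∀ (nu : Multipartition r) (i : ℤ), (∀ j, Adm e (a j) (nu j) K) →
      (nodeCount e a nu i : ℤ) = ∑ j, EE e (a j) (nu j) K
        + ∑ x ∈ Finset.range e, (∑ j, nn e (a j) (nu j) K x) * (((x : ℤ) - i) / e)
        - ∑ j, ∑ b ∈ Finset.range (Mo e (a j) K), (a j - b - 1 - i) / e := by
    intro nu i hnu
    rw [nodeCount_eq e he a nu K hnu]
    simp only [Finset.sum_mul]
    rw [Finset.sum_comm (s := Finset.range e), ← Finset.sum_add_distrib, ← Finset.sum_sub_distrib]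
    refine Finset.sum_congr rfl fun j _ => ?_
    rw [← sum_decomp e he (a j) (nu j) K (fun x => (x - i) / e), EE, ← Finset.sum_add_distrib,
      ← Finset.sum_sub_distrib]
    refine Finset.sum_congr rfl fun b _ => ?_
    congr 1
    have he' : (e : ℤ) ≠ 0 := by omega
    conv_lhs => rw [← Int.emod_add_mul_ediv (be (a j) (nu j) b) e]
    rw [show be (a j) (nu j) b % e + e * (be (a j) (nu j) b / e) - i =
      (be (a j) (nu j) b % e - i) + e * (be (a j) (nu j) b / e) by ring,
      Int.add_mul_ediv_left _ _ he']
    ring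
  have h3 : ∀ i : ℤ, (nodeCount e a lam i : ℚ) - nodeCount e a mu i = 
      ((∑ j, EE e (a j) (lam j) K - ∑ j, EE e (a j) (mu j) K : ℤ) : ℚ) := by
    intro i
    have : (nodeCount e a lam i : ℤ) - nodeCount e a mu i = 
      (∑ j, EE e (a j) (lam j) K - ∑ j, EE e (a j) (mu j) K : ℤ) := by
      rw [h2 lam i hl, h2 mu i hm]
      simp only [h]
      ring
    exact_mod_cast this
  unfold weight
  simp only [h1]
  rw [sub_sub_sub_cancel_right, ← Finset.sum_sub_distrib]
  simp only [h3]
  simp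
  ring

lemma min_EE {r : ℕ} (e : ℕ) (he : 2 ≤ e) (hr : 0 < r) (a : Fin r → ℤ) (lam mu : Multipartition r)
    (K : ℕ) (hl : ∀ j, Adm e (a j) (lam j) K) (hm : ∀ j, Adm e (a j) (mu j) K)
    (h : ∀ i : ℤ, ∑ j, nn e (a j) (lam j) K i = ∑ j, nn e (a j) (mu j) K i)
    (hmin : MinimalWeight e a lam) :
    ∑ j, EE e (a j) (lam j) K ≤ ∑ j, EE e (a j) (mu j) K := by
  have h1 := hmin mu ((sameHub_iff e he a lam mu K hl hm).2 h)
  have h2 := weight_diff e he a lam mu K hl hm h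
  have h3 : (r : ℚ) * ((∑ j, EE e (a j) (lam j) K - ∑ j, EE e (a j) (mu j) K : ℤ) : ℚ) ≤ 0 := by
    linarith
  have hr' : (0 : ℚ) < r := by exact_mod_cast hr
  have h4 : ((∑ j, EE e (a j) (lam j) K - ∑ j, EE e (a j) (mu j) K : ℤ) : ℚ) ≤ 0 := by
    by_contra hh
    push Not at hh
    nlinarith [mul_pos hr' hh]
  have h5 : (∑ j, EE e (a j) (lam j) K - ∑ j, EE e (a j) (mu j) K : ℤ) ≤ 0 := by exact_mod_cast h4
  omega

/-- window of the beta set -/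
def TT (e : ℕ) (a : ℤ) (lam : PartitionFun) (K : ℕ) : Finset ℤ :=
  (Finset.range (Mo e a K)).image (be a lam)

lemma sum_TT (e : ℕ) (a : ℤ) (lam : PartitionFun) (K : ℕ) (f : ℤ → ℤ) :
    ∑ x ∈ TT e a lam K, f x = ∑ b ∈ Finset.range (Mo e a K), f (be a lam b) := by
  unfold TT
  rw [Finset.sum_image]
  exact fun x _ y _ h => (be_strictAnti a lam).injective h

lemma nn_TT (e : ℕ) (a : ℤ) (lam : PartitionFun) (K : ℕ) (i : ℤ) :
    nn e a lam K i = ∑ x ∈ TT e a lam K, if x % e = i % e then 1 else 0 :=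
  (sum_TT e a lam K (fun x => if x % e = i % e then 1 else 0)).symm

lemma EE_TT (e : ℕ) (a : ℤ) (lam : PartitionFun) (K : ℕ) :
    EE e a lam K = ∑ x ∈ TT e a lam K, x / e :=
  (sum_TT e a lam K (fun x => x / e)).symm

lemma card_TT (e : ℕ) (a : ℤ) (lam : PartitionFun) (K : ℕ) :
    (TT e a lam K).card = Mo e a K := by
  unfold TT
  rw [Finset.card_image_of_injective _ (be_strictAnti a lam).injective, Finset.card_range]

lemma TT_ge {e : ℕ} {a : ℤ} {lam : PartitionFun} {K : ℕ} (h : Adm e a lam K) {x : ℤ}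
    (hx : x ∈ TT e a lam K) : -(K * e : ℤ) ≤ x := by
  obtain ⟨b, hb, rfl⟩ := Finset.mem_image.1 hx
  have := h.Mo_cast
  simp at hb
  unfold be; omega

lemma mem_betaSet {e : ℕ} {a : ℤ} {lam : PartitionFun} {K : ℕ} (h : Adm e a lam K) (x : ℤ) :
    x ∈ betaSet a lam ↔ x ∈ TT e a lam K ∨ x < -(K * e : ℤ) := by
  have hc := h.Mo_cast
  constructor
  · rintro ⟨b, rfl⟩
    by_cases hb : b < Mo e a K
    · left; exact Finset.mem_image.2 ⟨b, by simpa using hb, rfl⟩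
    · right
      rw [h.zero b (by omega)]; push_cast; omega
  · rintro (hx | hx)
    · obtain ⟨b, hb, rfl⟩ := Finset.mem_image.1 hx
      exact ⟨b, rfl⟩
    · refine ⟨(a - 1 - x).toNat, ?_⟩
      have h1 : ((a - 1 - x).toNat : ℤ) = a - 1 - x := Int.toNat_of_nonneg (by omega)
      rw [h.zero _ (by omega), h1]; push_cast; ring

lemma bot_mem_TT {e : ℕ} {a : ℤ} {lam : PartitionFun} {K : ℕ} (h : Adm e a lam K) :
    -(K * e : ℤ) ∈ TT e a lam K := by
  have hc := h.Mo_cast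
  have hp := h.pos
  refine Finset.mem_image.2 ⟨Mo e a K - 1, by simp; omega, ?_⟩
  unfold be
  rw [h.zero _ (by omega)]
  omega

lemma exists_partition (e : ℕ) (a : ℤ) (K : ℕ) (T : Finset ℤ) (hpos : 1 ≤ a + K * e)
    (hcard : T.card = Mo e a K) (hge : ∀ x ∈ T, -(K * e : ℤ) ≤ x) (hbot : -(K * e : ℤ) ∈ T) :
    ∃ lam : PartitionFun, Adm e a lam K ∧ TT e a lam K = T := by
  have hMc : (Mo e a K : ℤ) = a + K * e := by unfold Mo; omega
  set M := Mo e a K with hM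
  set f := T.orderEmbOfFin hcard with hf
  -- lower bound
  have hlow : ∀ (n : ℕ) (hn : n < M), -(K * e : ℤ) + n ≤ f ⟨n, hn⟩ := by
    intro n
    induction n with
    | zero => intro hn; simpa using hge _ (T.orderEmbOfFin_mem hcard _)
    | succ n ih =>
      intro hn
      have h1 := ih (by omega)
      have h2 : f ⟨n, by omega⟩ < f ⟨n+1, hn⟩ := f.strictMono (by simp)
      push_cast; omega
  have hmono : ∀ (n m : ℕ) (hm : m < M) (hnm : n ≤ m), f ⟨n, by omega⟩ + (m - n : ℕ) ≤ f ⟨m, hm⟩ := by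
    intro n m
    induction m with
    | zero => intro hm hnm; obtain rfl : n = 0 := by omega
              simp
    | succ m ih =>
      intro hm hnm
      rcases Nat.lt_or_ge m n with h | h
      · obtain rfl : n = m + 1 := by omega
        simp
      · have h1 := ih (by omega) h
        have h2 : f ⟨m, by omega⟩ < f ⟨m+1, hm⟩ := f.strictMono (by simp)
        omega
  have h0 : f ⟨0, by omega⟩ = -(K * e : ℤ) := by
    apply le_antisymm
    · have : -(K * e : ℤ) ∈ Set.range f := by rw [hf, Finset.range_orderEmbOfFin]; exact hbot
      obtain ⟨n, hn⟩ := this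
      rw [← hn]
      exact f.monotone (by simp [Fin.le_def])
    · simpa using hge _ (T.orderEmbOfFin_mem hcard _)
  let p : ℕ → ℕ := fun b => if h : b < M then (f ⟨M - 1 - b, by omega⟩ - a + b + 1).toNat else 0
  have hp : ∀ b (h : b < M), (p b : ℤ) = f ⟨M - 1 - b, by omega⟩ - a + b + 1 := by
    intro b h
    have := hlow (M - 1 - b) (by omega)
    simp only [p, dif_pos h]
    apply Int.toNat_of_nonneg
    omega
  have hanti : Antitone p := by
    intro b c hbc
    by_cases hc : c < M
    · have h1 := hp b (by omega)
      have h2 := hp c hc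
      have h3 := hmono (M - 1 - c) (M - 1 - b) (by omega) (by omega)
      omega
    · simp [p, hc]
  have hz : ∀ b : ℕ, a + K * e ≤ b + 1 → p b = 0 := by
    intro b hb
    by_cases hlt : b < M
    · have h1 := hp b hlt
      have : M - 1 - b = 0 := by omega
      simp only [this, h0] at h1
      omega
    · simp [p, hlt]
  refine ⟨⟨p, hanti, ⟨M, fun b hb => by simp [p, not_lt.2 hb]⟩⟩, ⟨hpos, hz⟩, ?_⟩
  apply Finset.eq_of_subset_of_card_le
  · intro x hx
    obtain ⟨b, hb, rfl⟩ := Finset.mem_image.1 hx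
    simp only [Finset.mem_range] at hb
    have h1 := hp b hb
    have : be a ⟨p, hanti, ⟨M, fun b hb => by simp [p, not_lt.2 hb]⟩⟩ b = f ⟨M - 1 - b, by omega⟩ := by
      simp only [be]; omega
    rw [this]
    exact T.orderEmbOfFin_mem hcard _
  · rw [card_TT, hcard]

lemma level_spec (e : ℕ) (he : 2 ≤ e) (a : ℤ) (lam : PartitionFun) (i : ℕ) :
    level e a lam i * e + i ∈ betaSet a lam ∧
      ∀ q : ℤ, q * e + i ∈ betaSet a lam → q ≤ level e a lam i := by
  obtain ⟨K, hK⟩ := exists_adm e he a lam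
  have hbdd : BddAbove {x : ℤ | x * (e : ℤ) + (i : ℤ) ∈ betaSet a lam} := by
    refine ⟨max (be a lam 0) 0, ?_⟩
    rintro q ⟨b, hb⟩
    have h1 : be a lam b ≤ be a lam 0 := (be_strictAnti a lam).antitone (Nat.zero_le b)
    have h2 : q * e + i ≤ be a lam 0 := by rw [hb]; exact h1
    rcases le_or_gt q 0 with h | h
    · exact le_max_of_le_right h
    · apply le_max_of_le_left
      have : q * 1 ≤ q * e := by apply mul_le_mul_of_nonneg_left <;> omega
      omega
  have hne : {x : ℤ | x * (e : ℤ) + (i : ℤ) ∈ betaSet a lam}.Nonempty := by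
    refine ⟨-(K : ℤ) - i - 1, ?_⟩
    show _ ∈ betaSet a lam
    rw [mem_betaSet hK]
    right
    have : (2 : ℤ) ≤ e := by exact_mod_cast he
    nlinarith
  exact ⟨Int.csSup_mem hne hbdd, fun q hq => le_csSup hbdd hq⟩

lemma level_shift (e : ℕ) (he : 2 ≤ e) (a m : ℤ) (lam : PartitionFun) (i : ℕ) :
    level e (a + e * m) lam i = level e a lam i + m := by
  have hB : ∀ x, x ∈ betaSet (a + e * m) lam ↔ x - e * m ∈ betaSet a lam := by
    intro x
    constructor
    · rintro ⟨b, rfl⟩; exact ⟨b, by ring⟩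
    · rintro ⟨b, hb⟩; exact ⟨b, by linarith⟩
  obtain ⟨h1, h2⟩ := level_spec e he a lam i
  obtain ⟨h3, h4⟩ := level_spec e he (a + e * m) lam i
  apply le_antisymm
  · have := h2 (level e (a + e * m) lam i - m) (by
      rw [hB] at h3
      convert h3 using 1; ring)
    omega
  · apply h4
    rw [hB]
    convert h1 using 1; ring

lemma core_mem {e : ℕ} (he : 2 ≤ e) {a : ℤ} {lam : PartitionFun} (hc : IsECore e a lam) (i : ℕ) (q : ℤ) :
    q * e + i ∈ betaSet a lam ↔ q ≤ level e a lam i := by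
  obtain ⟨h1, h2⟩ := level_spec e he a lam i
  refine ⟨h2 q, fun hq => ?_⟩
  have : ∀ n : ℕ, (level e a lam i - n) * e + i ∈ betaSet a lam := by
    intro n
    induction n with
    | zero => simpa using h1
    | succ n ih =>
      have := hc _ ih
      convert this using 1
      push_cast; ring
  have h3 := this (level e a lam i - q).toNat
  rw [Int.toNat_of_nonneg (by omega)] at h3
  simpa using h3

lemma swap_exists {e : ℕ} {a : ℤ} {lam : PartitionFun} {K : ℕ} (h : Adm e a lam K) (x y : ℤ)
    (hx : x ∈ TT e a lam K) (hx' : x ≠ -(K * e : ℤ)) (hy : y ∉ TT e a lam K)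
    (hy' : -(K * e : ℤ) ≤ y) :
    ∃ lam' : PartitionFun, Adm e a lam' K ∧
      ∀ f : ℤ → ℤ, ∑ z ∈ TT e a lam' K, f z = ∑ z ∈ TT e a lam K, f z + f y - f x := by
  have hy2 : y ∉ (TT e a lam K).erase x := fun hh => hy (Finset.mem_of_mem_erase hh)
  obtain ⟨lam', h1, h2⟩ := exists_partition e a K (insert y ((TT e a lam K).erase x)) h.pos
    (by
      rw [Finset.card_insert_of_notMem hy2, Finset.card_erase_add_one hx, card_TT])
    (by
      intro z hz
      rcases Finset.mem_insert.1 hz with rfl | hz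
      · exact hy'
      · exact TT_ge h (Finset.mem_of_mem_erase hz))
    (by
      apply Finset.mem_insert_of_mem
      exact Finset.mem_erase.2 ⟨hx'.symm, bot_mem_TT h⟩)
  refine ⟨lam', h1, fun f => ?_⟩
  rw [h2, Finset.sum_insert hy2]
  have := Finset.sum_erase_add (TT e a lam K) f hx
  linarith

lemma bead_div (e : ℕ) (q : ℤ) (i : ℕ) (hi : i < e) : (q * e + i) / (e : ℤ) = q := by
  have he' : (e : ℤ) ≠ 0 := by omega
  rw [add_comm, Int.add_mul_ediv_right _ _ he', Int.ediv_eq_zero_of_lt (by omega) (by omega), zero_add]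

lemma bead_mod (e : ℕ) (q : ℤ) (i : ℕ) : (q * e + i) % (e : ℤ) = (i : ℤ) % e := by
  rw [add_comm, Int.add_mul_emod_self_right]

lemma move_exists {e : ℕ} (he : 2 ≤ e) {a : ℤ} {lam : PartitionFun} {K : ℕ} (h : Adm e a lam K)
    (hK : ∀ i < e, 1 ≤ level e a lam i + K) (i i' : ℕ) (hi : i < e) (hi' : i' < e) :
    ∃ lam' : PartitionFun, Adm e a lam' K ∧
      (∀ z : ℤ, nn e a lam' K z = nn e a lam K z + (if (i : ℤ) % e = z % e then 1 else 0)
        - (if (i' : ℤ) % e = z % e then 1 else 0)) ∧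
      EE e a lam' K = EE e a lam K + 
        if i = i' then 0 else level e a lam i + 1 - level e a lam i' := by
  by_cases hii : i = i'
  · subst hii
    exact ⟨lam, h, fun z => by ring, by simp⟩
  · obtain ⟨h1, -⟩ := level_spec e he a lam i'
    obtain ⟨-, h2⟩ := level_spec e he a lam i
    have k1 := hK i hi
    have k2 := hK i' hi'
    have x1 : -(K * e : ℤ) < level e a lam i' * e + i' := by
      have : (2 : ℤ) ≤ e := by exact_mod_cast he
      nlinarith
    have y1 : -(K * e : ℤ) ≤ (level e a lam i + 1) * e + i := by
      have : (2 : ℤ) ≤ e := by exact_mod_cast he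
      nlinarith
    have x2 : level e a lam i' * e + i' ∈ TT e a lam K := by
      rcases (mem_betaSet h _).1 h1 with h3 | h3
      · exact h3
      · omega
    have y2 : (level e a lam i + 1) * e + i ∉ TT e a lam K := by
      intro hh
      have := h2 _ ((mem_betaSet h _).2 (Or.inl hh))
      omega
    obtain ⟨lam', ha, hf⟩ := swap_exists h _ _ x2 x1.ne' y2 y1
    refine ⟨lam', ha, fun z => ?_, ?_⟩
    · rw [nn_TT, nn_TT, hf, bead_mod, bead_mod]
    · rw [EE_TT, EE_TT, hf, bead_div _ _ _ hi, bead_div _ _ _ hi', if_neg hii]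
      ring

lemma base_exists {e r : ℕ} (he : 2 ≤ e) (hr : 0 < r) (a : Fin r → ℤ)
    (mu0 : Multipartition r) (hmin : MinimalWeight e a mu0) :
    ∃ (m : Fin r → ℤ) (b : ℕ → ℤ), ∀ i < e, ∀ j,
      level e (a j) (mu0 j) i + m j = b i ∨ level e (a j) (mu0 j) i + m j = b i + 1 := by
  set ℓ : ℕ → Fin r → ℤ := fun i j => level e (a j) (mu0 j) i with hℓ
  have hidx : ∀ j k : Fin r, ∃ i < e, ∀ i' < e, ℓ i j - ℓ i k ≤ ℓ i' j - ℓ i' k := by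
    intro j k
    obtain ⟨i, hi, hi'⟩ := Finset.exists_min_image (Finset.range e) (fun i => ℓ i j - ℓ i k)
      ⟨0, by simp; omega⟩
    exact ⟨i, by simpa using hi, fun i' h => hi' i' (by simpa using h)⟩
  choose idx hidx1 hidx2 using hidx
  set c : Fin r → Fin r → ℤ := fun j k => ℓ (idx j k) j - ℓ (idx j k) k + if j = k then 0 else 1 with hc
  obtain ⟨K0, hK0⟩ := exists_adm_multi e he a mu0
  obtain ⟨K, hKK, hKl⟩ : ∃ K, K0 ≤ K ∧ ∀ j, ∀ i < e, 1 ≤ ℓ i j + K := by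
    refine ⟨K0 + ∑ j, ∑ i ∈ Finset.range e, (1 - ℓ i j).toNat, by omega, fun j i hi => ?_⟩
    have h1 : (1 - ℓ i j).toNat ≤ ∑ i ∈ Finset.range e, (1 - ℓ i j).toNat :=
      Finset.single_le_sum (f := fun i => (1 - ℓ i j).toNat) (fun _ _ => Nat.zero_le _) (by simpa using hi)
    have h2 : ∑ i ∈ Finset.range e, (1 - ℓ i j).toNat ≤ ∑ j, ∑ i ∈ Finset.range e, (1 - ℓ i j).toNat :=
      Finset.single_le_sum (f := fun j => ∑ i ∈ Finset.range e, (1 - ℓ i j).toNat)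
        (fun _ _ => Nat.zero_le _) (Finset.mem_univ j)
    omega
  have hadm := hK0 K hKK
  obtain ⟨u, hu⟩ := potentials c (by intro j; simp [hc]) (by
    intro σ
    choose nu hnu1 hnu2 hnu3 using fun j => move_exists he (hadm j) (hKl j)
      (idx j (σ j)) (idx (σ.symm j) j) (hidx1 _ _) (hidx1 _ _)
    have hN : ∀ i : ℤ, ∑ j, nn e (a j) (mu0 j) K i = ∑ j, nn e (a j) (nu j) K i := by
      intro i
      simp only [hnu2, Finset.sum_sub_distrib, Finset.sum_add_distrib]
      have := Equiv.sum_comp σ (fun j => if ((idx (σ.symm j) j : ℕ) : ℤ) % e = i % e then (1 : ℤ) else 0)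
      simp only [Equiv.symm_apply_apply] at this
      rw [this]; ring
    have hE := min_EE e he hr a mu0 nu K hadm hnu1 hN hmin
    simp only [hnu3, Finset.sum_add_distrib] at hE
    have h1 : ∑ j, (if idx j (σ j) = idx (σ.symm j) j then 0 else
        ℓ (idx j (σ j)) j + 1 - ℓ (idx (σ.symm j) j) j) ≤
        ∑ j, (ℓ (idx j (σ j)) j + (if j = σ j then 0 else 1)) - ∑ j, ℓ (idx (σ.symm j) j) j := by
      rw [← Finset.sum_sub_distrib]
      apply Finset.sum_le_sum
      intro j _
      by_cases hj : j = σ j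
      · have hj' : σ.symm j = j := by rw [Equiv.symm_apply_eq]; exact hj
        rw [hj', ← hj]; simp
      · split_ifs with h
        · rw [h]; omega
        · omega
    have h2 := Equiv.sum_comp σ (fun j => ℓ (idx (σ.symm j) j) j)
    simp only [Equiv.symm_apply_apply] at h2
    have h3 : ∑ j, c j (σ j) = ∑ j, (ℓ (idx j (σ j)) j + (if j = σ j then 0 else 1)) - 
        ∑ j, ℓ (idx j (σ j)) (σ j) := by
      rw [← Finset.sum_sub_distrib]
      refine Finset.sum_congr rfl fun j _ => ?_
      simp only [hc]; ring
    rw [h3, h2]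
    linarith)
  have hne : (Finset.univ : Finset (Fin r)).Nonempty := ⟨⟨0, hr⟩, Finset.mem_univ _⟩
  have hb : ∀ i, ∃ k : Fin r, ∀ j, ℓ i k - u k ≤ ℓ i j - u j := by
    intro i
    obtain ⟨k, -, hk⟩ := Finset.exists_min_image Finset.univ (fun j => ℓ i j - u j) hne
    exact ⟨k, fun j => hk j (Finset.mem_univ j)⟩
  choose k hk using hb
  refine ⟨fun j => - u j, fun i => ℓ i (k i) - u (k i), fun i hi j => ?_⟩
  have h1 := hk i j
  have h2 := hu (k i) j
  have h3 := hidx2 (k i) j i hi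
  have h4 : c (k i) j ≤ ℓ (idx (k i) j) (k i) - ℓ (idx (k i) j) j + 1 := by
    simp only [hc]; split_ifs <;> omega
  simp only
  show ℓ i j + - u j = _ ∨ ℓ i j + - u j = _
  omega

lemma delta_bound {e r : ℕ} (he : 2 ≤ e) (hr : 0 < r) (a : Fin r → ℤ)
    (mu0 : Multipartition r) (hcore : IsMulticore e a mu0)
    (mu : Multipartition r) (hhub : SameHub e a mu0 mu) (hmin : MinimalWeight e a mu)
    (m : Fin r → ℤ) (b : ℕ → ℤ) (hb : ∀ i < e, ∀ j,
      level e (a j) (mu0 j) i + m j = b i ∨ level e (a j) (mu0 j) i + m j = b i + 1) :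
    ∃ K : ℕ, ∀ j, Adm e (a j) (mu j) K ∧ ∀ i < e,
      b i - m j + K + 1 ≤ nn e (a j) (mu j) K i ∧ nn e (a j) (mu j) K i ≤ b i - m j + K + 2 := by
  obtain ⟨K1, hK1⟩ := exists_adm_multi e he a mu0
  obtain ⟨K2, hK2⟩ := exists_adm_multi e he a mu
  set K := K1 + K2
  have hA0 := hK1 K (by omega)
  have hA := hK2 K (by omega)
  have he' : (0 : ℤ) < e := by omega
  have hN := (sameHub_iff e he a mu0 mu K hA0 hA).1 hhub
  have hE := min_EE e he hr a mu mu0 K hA hA0 (fun i => (hN i).symm) hmin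
  let p : Fin r → ℤ → ℤ := fun j x => x / e - b (x % e).toNat + (m j - 1)
  have hx : ∀ x : ℤ, ∃ q : ℤ, ∃ i < e, x = q * e + (i : ℕ) := by
    intro x
    have h2 := Int.emod_nonneg x he'.ne'
    have h3 := Int.emod_lt_of_pos x he'
    refine ⟨x / e, (x % e).toNat, by omega, ?_⟩
    rw [Int.toNat_of_nonneg h2]
    have := Int.emod_add_mul_ediv x e
    linarith
  have hp : ∀ j (q : ℤ) (i : ℕ), i < e → p j (q * e + i) = q - (b i - m j) - 1 := by
    intro j q i hi
    simp only [p]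
    rw [bead_div e q i hi, bead_mod, Int.emod_eq_of_lt (by omega) (by omega), Int.toNat_natCast]
    ring
  have hsum : ∀ nu : Multipartition r, (∑ j, ∑ x ∈ TT e (a j) (nu j) K, p j x) =
      ∑ j, EE e (a j) (nu j) K - ∑ i ∈ Finset.range e, (∑ j, nn e (a j) (nu j) K i) * b i
        + ∑ j, Mo e (a j) K * (m j - 1) := by
    intro nu
    simp only [Finset.sum_mul]
    rw [Finset.sum_comm (s := Finset.range e), ← Finset.sum_sub_distrib, ← Finset.sum_add_distrib]
    refine Finset.sum_congr rfl fun j _ => ?_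
    have := sum_decomp e he (a j) (nu j) K (fun x => b x.toNat)
    simp only [Int.toNat_natCast] at this
    rw [← this, EE_TT, ← sum_TT e (a j) (nu j) K (fun x => b (x % e).toNat)]
    simp only [p, Finset.sum_add_distrib, Finset.sum_sub_distrib, Finset.sum_const, card_TT]
    simp
    ring
  have hle : (∑ j, ∑ x ∈ TT e (a j) (mu j) K, p j x) ≤ ∑ j, ∑ x ∈ TT e (a j) (mu0 j) K, p j x := by
    rw [hsum, hsum]
    simp only [hN]
    linarith
  -- mu0 membership
  have hmem : ∀ j (q : ℤ) (i : ℕ), i < e → (q * e + i ∈ TT e (a j) (mu0 j) K ↔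
      q ≤ level e (a j) (mu0 j) i ∧ -(K : ℤ) ≤ q) := by
    intro j q i hi
    rw [← core_mem he (hcore j), mem_betaSet (hA0 j)]
    have hi' : (i : ℤ) < e := by exact_mod_cast hi
    constructor
    · intro h
      refine ⟨Or.inl h, ?_⟩
      have := TT_ge (hA0 j) h
      by_contra hq
      nlinarith [show q + 1 ≤ -(K : ℤ) by omega]
    · rintro ⟨h | h, h2⟩
      · exact h
      · nlinarith
  have hge0 : ∀ j (q : ℤ) (i : ℕ), i < e → q * e + i ∈ TT e (a j) (mu j) K → -(K : ℤ) ≤ q := by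
    intro j q i hi h
    have hi' : (i : ℤ) < e := by exact_mod_cast hi
    have := TT_ge (hA j) h
    by_contra hq
    nlinarith [show q + 1 ≤ -(K : ℤ) by omega]
  have hpos : ∀ j, ∀ x ∈ TT e (a j) (mu j) K \ TT e (a j) (mu0 j) K, 0 ≤ p j x := by
    intro j x hxx
    obtain ⟨q, i, hi, rfl⟩ := hx x
    rw [Finset.mem_sdiff, hmem j q i hi] at hxx
    have h1 := hge0 j q i hi hxx.1
    rw [hp j q i hi]
    rcases hb i hi j with h | h <;> omega
  have hneg : ∀ j, ∀ x ∈ TT e (a j) (mu0 j) K \ TT e (a j) (mu j) K, 0 ≤ - p j x := by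
    intro j x hxx
    obtain ⟨q, i, hi, rfl⟩ := hx x
    rw [Finset.mem_sdiff, hmem j q i hi] at hxx
    rw [hp j q i hi]
    rcases hb i hi j with h | h <;> omega
  have hdiff : ∀ j, ∑ x ∈ TT e (a j) (mu j) K, p j x - ∑ x ∈ TT e (a j) (mu0 j) K, p j x =
      ∑ x ∈ TT e (a j) (mu j) K \ TT e (a j) (mu0 j) K, p j x +
      ∑ x ∈ TT e (a j) (mu0 j) K \ TT e (a j) (mu j) K, - p j x := by
    intro j
    rw [Finset.sum_neg_distrib, ← sub_eq_add_neg, Finset.sum_sdiff_sub_sum_sdiff]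
  have hd0 : ∀ j, 0 ≤ ∑ x ∈ TT e (a j) (mu j) K, p j x - ∑ x ∈ TT e (a j) (mu0 j) K, p j x := by
    intro j
    rw [hdiff]
    exact add_nonneg (Finset.sum_nonneg (hpos j)) (Finset.sum_nonneg (hneg j))
  have hd1 : ∀ j, ∑ x ∈ TT e (a j) (mu j) K, p j x - ∑ x ∈ TT e (a j) (mu0 j) K, p j x = 0 := by
    have h1 : ∑ j, (∑ x ∈ TT e (a j) (mu j) K, p j x - ∑ x ∈ TT e (a j) (mu0 j) K, p j x) = 0 := by
      apply le_antisymm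
      · rw [Finset.sum_sub_distrib]; linarith
      · exact Finset.sum_nonneg fun j _ => hd0 j
    intro j
    exact (Finset.sum_eq_zero_iff_of_nonneg (fun j _ => hd0 j)).1 h1 j (Finset.mem_univ j)
  have hz1 : ∀ j, ∀ x ∈ TT e (a j) (mu j) K \ TT e (a j) (mu0 j) K, p j x = 0 := by
    intro j
    have h1 := Finset.sum_nonneg (hpos j)
    have h2 := Finset.sum_nonneg (hneg j)
    have h3 := hd1 j
    rw [hdiff] at h3
    exact (Finset.sum_eq_zero_iff_of_nonneg (hpos j)).1 (by linarith)
  have hz2 : ∀ j, ∀ x ∈ TT e (a j) (mu0 j) K \ TT e (a j) (mu j) K, - p j x = 0 := by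
    intro j
    have h1 := Finset.sum_nonneg (hpos j)
    have h2 := Finset.sum_nonneg (hneg j)
    have h3 := hd1 j
    rw [hdiff] at h3
    exact (Finset.sum_eq_zero_iff_of_nonneg (hneg j)).1 (by linarith)
  refine ⟨K, fun j => ⟨hA j, fun i hi => ?_⟩⟩
  have hlev : -(K : ℤ) - 1 ≤ level e (a j) (mu0 j) i := by
    rw [← core_mem he (hcore j), mem_betaSet (hA0 j)]
    right
    have hi' : (i : ℤ) < e := by exact_mod_cast hi
    nlinarith
  have hinj : Function.Injective (fun q : ℤ => q * e + (i : ℤ)) := by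
    intro q q' h
    simp only [add_left_inj] at h
    exact mul_right_cancel₀ he'.ne' h
  have hnn : nn e (a j) (mu j) K i =
      (((TT e (a j) (mu j) K).filter (fun x => x % e = (i : ℤ) % e)).card : ℤ) := by
    rw [nn_TT, Finset.card_filter]; push_cast; rfl
  rw [hnn]
  constructor
  · have hsub : (Finset.Icc (-(K : ℤ)) (b i - m j)).image (fun q : ℤ => q * e + (i : ℤ)) ⊆
        (TT e (a j) (mu j) K).filter (fun x => x % e = (i : ℤ) % e) := by
      intro x hxx
      obtain ⟨q, hq, rfl⟩ := Finset.mem_image.1 hxx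
      rw [Finset.mem_Icc] at hq
      refine Finset.mem_filter.2 ⟨?_, bead_mod e q i⟩
      have h0 : q * e + i ∈ TT e (a j) (mu0 j) K := by
        rw [hmem j q i hi]
        rcases hb i hi j with h | h <;> omega
      by_contra hnot
      have := hz2 j _ (Finset.mem_sdiff.2 ⟨h0, hnot⟩)
      rw [hp j q i hi] at this
      omega
    have := Finset.card_le_card hsub
    rw [Finset.card_image_of_injective _ hinj, Int.card_Icc] at this
    omega
  · have hsub : (TT e (a j) (mu j) K).filter (fun x => x % e = (i : ℤ) % e) ⊆
        (Finset.Icc (-(K : ℤ)) (b i - m j + 1)).image (fun q : ℤ => q * e + (i : ℤ)) := by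
      intro x hxx
      obtain ⟨hxT, hxm⟩ := Finset.mem_filter.1 hxx
      obtain ⟨q, i', hi', rfl⟩ := hx x
      rw [bead_mod, Int.emod_eq_of_lt (by omega) (by omega), Int.emod_eq_of_lt (by omega) (by omega)] at hxm
      obtain rfl : i' = i := by exact_mod_cast hxm
      refine Finset.mem_image.2 ⟨q, ?_, rfl⟩
      rw [Finset.mem_Icc]
      refine ⟨hge0 j q i' hi hxT, ?_⟩
      by_cases h0 : q * e + (i' : ℤ) ∈ TT e (a j) (mu0 j) K
      · rw [hmem j q i' hi] at h0
        rcases hb i' hi j with h | h <;> omega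
      · have := hz1 j _ (Finset.mem_sdiff.2 ⟨hxT, h0⟩)
        rw [hp j q i' hi] at this
        omega
    have := Finset.card_le_card hsub
    rw [Finset.card_image_of_injective _ hinj, Int.card_Icc] at this
    rcases hb i hi j with h | h <;> omega

lemma isBaseTuple_iff {e r : ℕ} (he : 2 ≤ e) (a : Fin r → ℤ) (mu : Multipartition r)
    (a' : Fin r → ℤ) (b : ℕ → ℤ) : IsBaseTuple e a mu a' b ↔ ∃ m : Fin r → ℤ,
      (∀ j, a' j = a j + e * m j) ∧ ∀ i < e, ∀ j,
      level e (a j) (mu j) i + m j = b i ∨ level e (a j) (mu j) i + m j = b i + 1 := by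
  constructor
  · rintro ⟨h1, h2⟩
    choose m hm using h1
    have hm' : ∀ j, a' j = a j + e * m j := fun j => by linarith [hm j]
    refine ⟨m, hm', fun i hi j => ?_⟩
    have := h2 i hi j
    rwa [hm', level_shift e he] at this
  · rintro ⟨m, h1, h2⟩
    refine ⟨fun j => ⟨m j, by rw [h1]; ring⟩, fun i hi j => ?_⟩
    rw [h1, level_shift e he]
    exact h2 i hi j

lemma K_spec {e r : ℕ} (he : 2 ≤ e) (hr : 0 < r) (a : Fin r → ℤ) (i : ℕ) (hi : i < e)
    (mu : Multipartition r) (hmin : MinimalWeight e a mu) :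
    ∃ (m : Fin r → ℤ) (b : ℕ → ℤ), (∀ i < e, ∀ j,
      level e (a j) (mu j) i + m j = b i ∨ level e (a j) (mu j) i + m j = b i + 1) ∧
      Kconst e a mu i = b i - b (if i = 0 then e - 1 else i - 1) - (if i = 0 then 2 else 1) := by
  obtain ⟨m, b, hb⟩ := base_exists he hr a mu hmin
  have hshift : ∀ t : ℤ, IsBaseTuple e a mu (fun j => a j + e * (m j + t)) (fun i => b i + t) := by
    intro t
    rw [isBaseTuple_iff he]
    refine ⟨fun j => m j + t, fun j => rfl, fun i hi j => ?_⟩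
    have := hb i hi j
    simp only
    omega
  have hBi : sSup {x : ℤ | ∃ a' bt, IsBaseTuple e a mu a' bt ∧ bt i = x} = 0 := by
    apply Int.csSup_of_not_bddAbove
    rintro ⟨C, hC⟩
    have := hC (a := C + 1) ⟨_, _, hshift (C + 1 - b i), by ring⟩
    omega
  set ip : ℕ := if i = 0 then e - 1 else i - 1 with hip
  have hip' : ip < e := by rw [hip]; split_ifs <;> omega
  set S : Set ℤ := {x : ℤ | ∃ a' bt, IsBaseTuple e a mu a' bt ∧ bt i = 0 ∧ bt ip = x} with hS
  have hne : S.Nonempty := ⟨_, _, _, hshift (- b i), by ring, rfl⟩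
  have hbd : BddBelow S := by
    refine ⟨level e (a ⟨0, hr⟩) (mu ⟨0, hr⟩) ip - level e (a ⟨0, hr⟩) (mu ⟨0, hr⟩) i - 1, ?_⟩
    rintro x ⟨a', bt, h1, h2, rfl⟩
    obtain ⟨m', -, h3⟩ := (isBaseTuple_iff he a mu a' bt).1 h1
    have h4 := h3 i hi ⟨0, hr⟩
    have h5 := h3 ip hip' ⟨0, hr⟩
    omega
  obtain ⟨a', bt, h1, h2, h3⟩ := Int.csInf_mem hne hbd
  obtain ⟨m', -, h4⟩ := (isBaseTuple_iff he a mu a' bt).1 h1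
  refine ⟨m', bt, h4, ?_⟩
  unfold Kconst
  simp only [hBi, h2, ← hip]
  rw [h3]

/-- inequality (3.5): `K_ī(C) ≤ d_ī(μ)` for every multipartition `μ`
lying in the core block `C` (given by a multicore `mu0` of minimal weight). -/
theorem stmt_8 {e r : ℕ} (he : 2 ≤ e) (hr : 0 < r) (a : Fin r → ℤ)
    (ibar : ℕ) (hibar : ibar < e)
    (mu0 : Multipartition r) (hmu0core : IsMulticore e a mu0)
    (hmu0min : MinimalWeight e a mu0) :
    ∀ mu : Multipartition r, SameHub e a mu0 mu → MinimalWeight e a mu →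
      Kconst e a mu0 ibar ≤ dmin e a mu (ibar : ℤ) := by
  intro mu hhub hmin
  obtain ⟨m, b, hb, hK⟩ := K_spec he hr a ibar hibar mu0 hmu0min
  obtain ⟨K, hKb⟩ := delta_bound he hr a mu0 hmu0core mu hhub hmin m b hb
  rw [hK]
  unfold dmin
  apply le_csInf
  · exact ⟨_, ⟨0, hr⟩, rfl⟩
  · rintro x ⟨j, rfl⟩
    obtain ⟨hA, hn⟩ := hKb j
    rw [delta_eq e a mu K ibar j hA]
    have h1 := (hn ibar hibar).1
    by_cases h0 : ibar = 0
    · subst h0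
      have h2 := (hn (e - 1) (by omega)).2
      have h3 : nn e (a j) (mu j) K (((0 : ℕ) : ℤ) - 1) = nn e (a j) (mu j) K ((e - 1 : ℕ) : ℤ) := by
        apply nn_congr
        rw [Nat.cast_sub (by omega)]
        rw [Int.emod_eq_emod_iff_emod_sub_eq_zero]
        apply Int.emod_eq_zero_of_dvd
        exact ⟨-1, by push_cast; ring⟩
      rw [h3]
      simp at h1 h2 ⊢
      omega
    · have h2 := (hn (ibar - 1) (by omega)).2
      rw [Nat.cast_sub (by omega)] at h2
      have h3 : ((ibar : ℕ) : ℤ) % e ≠ 0 := by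
        rw [Int.emod_eq_of_lt (by omega) (by omega)]; omega
      rw [if_neg h3, if_neg h0, if_neg h0]
      push_cast at h2
      omega

end AK
end

section
/- Let μ be a multicore lying in a core block, let a' be a multicharge with a'_j ≡ a_j (mod e) for all j, and let (b_0,…,b_{e−1}) be a base tuple for μ with respect to a' (so ℓ^{a'}_{ij}(μ) ∈ {b_i, b_i+1} for all i,j). Then for every j ∈ {1,…,r}: δ^j_i(μ) ∈ {b_i − b_{i−1} − 1, b_i − b_{i−1}, b_i − b_{i−1} + 1} for every i ∈ {1,…,e−1}, and δ^j_0(μ) ∈ {b_0 − b_{e−1} − 2, b_0 − b_{e−1} − 1, b_0 − b_{e−1}}. -/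
/-!
Combinatorial framework for multipartitions, residues, β-sets, abacus levels,
weights, hubs, core blocks and Scopes-type moves, following Fayers and the paper.
Rows and columns of Young diagrams are indexed from 0, so the node in row `b`
and column `c` (0-based) of component `j` has residue `a j + c - b` mod `e`.
-/

open scoped Classical

namespace AK

lemma beta_shift (a a' x : ℤ) (lam : PartitionFun) :
    x ∈ betaSet a' lam ↔ x - (a' - a) ∈ betaSet a lam := by
  constructor
  · rintro ⟨b, hb⟩; exact ⟨b, by rw [hb]; ring⟩
  · rintro ⟨b, hb⟩; exact ⟨b, by linarith⟩

lemma core_shift {e : ℕ} {a : ℤ} (a' : ℤ) {lam : PartitionFun} (h : IsECore e a lam) :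
    IsECore e a' lam := by
  intro x hx
  rw [beta_shift a] at hx ⊢
  have := h _ hx
  have e1 : x - (e : ℤ) - (a' - a) = x - (a' - a) - e := by ring
  rw [e1]; exact this

lemma exists_level {e : ℕ} (he : 2 ≤ e) {a : ℤ} {lam : PartitionFun} (h : IsECore e a lam)
    (i : ℤ) : ∃ L : ℤ, ∀ x : ℤ, x * (e : ℤ) + i ∈ betaSet a lam ↔ x ≤ L := by
  have he' : (2 : ℤ) ≤ e := by exact_mod_cast he
  have hbdd : ∀ x : ℤ, x * (e : ℤ) + i ∈ betaSet a lam → x ≤ |(lam.part 0 : ℤ) + a - i| := by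
    rintro x ⟨b, hb⟩
    have h1 : (lam.part b : ℤ) ≤ lam.part 0 := by exact_mod_cast lam.antitone (Nat.zero_le b)
    have h2 := le_abs_self ((lam.part 0 : ℤ) + a - i)
    have h3 := abs_nonneg ((lam.part 0 : ℤ) + a - i)
    by_contra hc
    push Not at hc
    nlinarith
  have hne : ∃ x : ℤ, x * (e : ℤ) + i ∈ betaSet a lam := by
    obtain ⟨N, hN⟩ := lam.finite_support
    have h2 := neg_abs_le (a - 1 - i)
    have h3 := abs_nonneg (a - 1 - i)
    refine ⟨-(|a - 1 - i| + N), (a - 1 - i + (|a - 1 - i| + N) * e).toNat, ?_⟩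
    have h4 : (N : ℤ) ≤ a - 1 - i + (|a - 1 - i| + N) * e := by nlinarith
    rw [hN _ (by omega), Int.toNat_of_nonneg (by omega)]
    push_cast; ring
  obtain ⟨L, hL, hmax⟩ := Int.exists_greatest_of_bdd ⟨_, hbdd⟩ hne
  refine ⟨L, fun x => ⟨hmax x, fun hx => ?_⟩⟩
  have key : ∀ n : ℕ, (L - n) * (e : ℤ) + i ∈ betaSet a lam := by
    intro n
    induction n with
    | zero => simpa using hL
    | succ n ih =>
      have := h _ ih
      convert this using 1
      push_cast; ring
  have := key (L - x).toNat
  rw [Int.toNat_of_nonneg (by omega)] at this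
  convert this using 2
  ring

lemma level_eq {e : ℕ} {a : ℤ} {lam : PartitionFun} {i : ℕ} {L : ℤ}
    (h : ∀ x : ℤ, x * (e : ℤ) + i ∈ betaSet a lam ↔ x ≤ L) : level e a lam i = L := by
  have : {x : ℤ | x * (e : ℤ) + (i : ℤ) ∈ betaSet a lam} = Set.Iic L := by
    ext x; exact h x
  rw [level, this, csSup_Iic]

lemma rem_fwd {lam : PartitionFun} {a : ℤ} {b c : ℕ} (h : lam.Removable b c) :
    a + c - b ∈ betaSet a lam ∧ a + c - b - 1 ∉ betaSet a lam := by
  obtain ⟨h1, h2⟩ := h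
  refine ⟨⟨b, by rw [h1]; push_cast; ring⟩, ?_⟩
  rintro ⟨b', hb⟩
  rcases le_or_gt b' b with hl | hl
  · have := lam.antitone hl; omega
  · have := lam.antitone (Nat.succ_le_of_lt hl); simp at this; omega

lemma rem_bwd {lam : PartitionFun} {a y : ℤ} (h1 : y ∈ betaSet a lam)
    (h2 : y - 1 ∉ betaSet a lam) : ∃ b c : ℕ, lam.Removable b c ∧ a + c - b = y := by
  obtain ⟨b, hb⟩ := h1
  have h3 := lam.antitone (Nat.le_succ b)
  simp only [Nat.succ_eq_add_one] at h3
  have h4 : lam.part (b + 1) ≠ lam.part b := fun h => h2 ⟨b + 1, by rw [h]; push_cast; omega⟩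
  exact ⟨b, lam.part b - 1, ⟨by omega, by omega⟩, by omega⟩

lemma add_fwd {lam : PartitionFun} {a : ℤ} {b c : ℕ} (h : lam.Addable b c) :
    a + c - b - 1 ∈ betaSet a lam ∧ a + c - b ∉ betaSet a lam := by
  obtain ⟨h1, h2⟩ := h
  refine ⟨⟨b, by rw [h1]; ring⟩, ?_⟩
  rintro ⟨b', hb⟩
  rcases le_or_gt b b' with hl | hl
  · have := lam.antitone hl; omega
  · have := lam.antitone (Nat.le_sub_one_of_lt hl); omega

lemma add_bwd {lam : PartitionFun} {a y : ℤ} (h1 : y - 1 ∈ betaSet a lam)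
    (h2 : y ∉ betaSet a lam) : ∃ b c : ℕ, lam.Addable b c ∧ a + c - b = y := by
  obtain ⟨b, hb⟩ := h1
  refine ⟨b, lam.part b, ⟨rfl, ?_⟩, by omega⟩
  by_cases h0 : b = 0
  · exact Or.inl h0
  right
  have h3 := lam.antitone (Nat.sub_le b 1)
  have h4 : lam.part (b - 1) ≠ lam.part b := fun h => h2 ⟨b - 1, by rw [h]; omega⟩
  omega

lemma ncard_aux {e : ℕ} (he : 2 ≤ e) {a i L M : ℤ} {P : ℕ → ℕ → Prop} {Q : ℤ → Prop}
    (hinj : ∀ b c b' c', P b c → P b' c' → (c : ℤ) - b = c' - b' → b = b')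
    (hf : ∀ b c : ℕ, P b c → Q (a + c - b))
    (hb : ∀ y : ℤ, Q y → ∃ b c : ℕ, P b c ∧ a + c - b = y)
    (hQ : ∀ x : ℤ, Q (x * e + i) ↔ x ∈ Set.Ioc M L) :
    Set.ncard {p : ℕ × ℕ | P p.1 p.2 ∧ (a + (p.2 : ℤ) - (p.1 : ℤ)) % (e : ℤ) = i % e}
      = (L - M).toNat := by
  have he0 : (e : ℤ) ≠ 0 := by omega
  rw [← Int.card_Ioc, ← Set.ncard_coe_finset, Finset.coe_Ioc]
  have key : ∀ y : ℤ, y % (e : ℤ) = i % e → ((y - i) / e) * e + i = y := by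
    intro y hy
    have : (e : ℤ) ∣ y - i := Int.dvd_of_emod_eq_zero (Int.emod_eq_emod_iff_emod_sub_eq_zero.1 hy)
    rw [Int.ediv_mul_cancel this]; ring
  refine Set.ncard_congr (fun p _ => (a + (p.2 : ℤ) - (p.1 : ℤ) - i) / e) ?_ ?_ ?_
  · rintro ⟨b, c⟩ ⟨h1, h2⟩
    rw [← hQ, key _ h2]
    exact hf _ _ h1
  · rintro ⟨b, c⟩ ⟨b', c'⟩ ⟨h1, h2⟩ ⟨h1', h2'⟩ h
    simp only at h h1 h1' h2 h2'
    have k1 := key _ h2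
    rw [h, key _ h2'] at k1
    have := hinj _ _ _ _ h1 h1' (by omega)
    ext <;> simp <;> omega
  · intro x hx
    obtain ⟨b, c, h1, h2⟩ := hb _ ((hQ x).2 hx)
    refine ⟨(b, c), ⟨h1, ?_⟩, ?_⟩
    · simp only [h2]; simp
    · simp only [h2, add_sub_cancel_right]; exact Int.mul_ediv_cancel x he0

lemma delta_eq_s9 {e r : ℕ} (he : 2 ≤ e) (a a' : Fin r → ℤ) (mu : Multipartition r) (j : Fin r)
    (hd : (e : ℤ) ∣ a' j - a j) (i L M : ℤ)
    (hL : ∀ x : ℤ, x * (e : ℤ) + i ∈ betaSet (a' j) (mu j) ↔ x ≤ L)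
    (hM : ∀ x : ℤ, x * (e : ℤ) + (i - 1) ∈ betaSet (a' j) (mu j) ↔ x ≤ M) :
    delta e a mu i j = L - M := by
  have hres : ∀ p : ℕ × ℕ, (a j + (p.2 : ℤ) - (p.1 : ℤ)) % (e : ℤ)
      = (a' j + (p.2 : ℤ) - (p.1 : ℤ)) % (e : ℤ) := by
    intro p
    apply Int.ModEq.symm
    apply Int.ModEq.sub_right
    apply Int.ModEq.add_right
    exact (Int.modEq_iff_dvd.2 hd).symm
  have hM' : ∀ x : ℤ, x * (e : ℤ) + i - 1 ∈ betaSet (a' j) (mu j) ↔ x ≤ M := by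
    intro x; rw [← hM, add_sub_assoc]
  unfold delta removableCount addableCount
  simp only [hres]
  rw [ncard_aux he (L := L) (M := M) (P := (mu j).Removable)
      (Q := fun y => y ∈ betaSet (a' j) (mu j) ∧ y - 1 ∉ betaSet (a' j) (mu j)),
    ncard_aux he (L := M) (M := L) (P := (mu j).Addable)
      (Q := fun y => y - 1 ∈ betaSet (a' j) (mu j) ∧ y ∉ betaSet (a' j) (mu j))]
  · omega
  · intro b c b' c' h h' hh
    have h1 := h.1
    have h1' := h'.1
    rcases lt_trichotomy b b' with hl | hl | hl
    · have := (mu j).antitone hl.le; omega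
    · exact hl
    · have := (mu j).antitone hl.le; omega
  · intro b c h; exact add_fwd h
  · intro y h; exact add_bwd h.1 h.2
  · intro x; simp only [hL, hM', Set.mem_Ioc]; omega
  · intro b c b' c' h h' hh
    have h1 := h.1
    have h1' := h'.1
    rcases lt_trichotomy b b' with hl | hl | hl
    · have := (mu j).antitone hl.le; omega
    · exact hl
    · have := (mu j).antitone hl.le; omega
  · intro b c h; exact rem_fwd h
  · intro y h; exact rem_bwd h.1 h.2
  · intro x; simp only [hL, hM', Set.mem_Ioc]; omega

/-- displays (3.2)–(3.3): if `μ` is a multicore lying in a core block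
and `(b_0,…,b_{e−1})` is a base tuple for `μ` with respect to an admissible
multicharge `a'`, then for every component `j`,
`δ^j_i(μ) ∈ {b_i − b_{i−1} − 1, b_i − b_{i−1}, b_i − b_{i−1} + 1}` for `1 ≤ i ≤ e−1`,
and `δ^j_0(μ) ∈ {b_0 − b_{e−1} − 2, b_0 − b_{e−1} − 1, b_0 − b_{e−1}}`. -/
theorem stmt_9 {e r : ℕ} (he : 2 ≤ e) (hr : 0 < r) (a : Fin r → ℤ)
    (mu : Multipartition r) (hmucore : IsMulticore e a mu)
    (hmumin : MinimalWeight e a mu)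
    (a' : Fin r → ℤ) (b : ℕ → ℤ) (hbt : IsBaseTuple e a mu a' b) :
    ∀ j : Fin r,
      (∀ i : ℕ, 1 ≤ i → i < e →
        delta e a mu (i : ℤ) j = b i - b (i - 1) - 1 ∨
        delta e a mu (i : ℤ) j = b i - b (i - 1) ∨
        delta e a mu (i : ℤ) j = b i - b (i - 1) + 1) ∧
      (delta e a mu 0 j = b 0 - b (e - 1) - 2 ∨
        delta e a mu 0 j = b 0 - b (e - 1) - 1 ∨
        delta e a mu 0 j = b 0 - b (e - 1)) := by
  intro j
  have hc : IsECore e (a' j) (mu j) := core_shift (a' j) (hmucore j)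
  obtain ⟨hd, hl⟩ := hbt
  refine ⟨fun i h1 hi => ?_, ?_⟩
  · obtain ⟨L, hL⟩ := exists_level he hc (i : ℤ)
    obtain ⟨M, hM⟩ := exists_level he hc ((i - 1 : ℕ) : ℤ)
    have e1 := level_eq hL
    have e2 := level_eq hM
    have hcast : ((i - 1 : ℕ) : ℤ) = (i : ℤ) - 1 := by omega
    rw [hcast] at hM
    rw [delta_eq_s9 he a a' mu j (hd j) i L M hL hM]
    have b1 := hl i hi j
    have b2 := hl (i - 1) (by omega) j
    omega
  · obtain ⟨L, hL⟩ := exists_level he hc ((0 : ℕ) : ℤ)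
    obtain ⟨M, hM⟩ := exists_level he hc ((e - 1 : ℕ) : ℤ)
    have e1 := level_eq hL
    have e2 := level_eq hM
    have hcast : ((e - 1 : ℕ) : ℤ) = (e : ℤ) - 1 := by omega
    rw [hcast] at hM
    have hM' : ∀ x : ℤ, x * (e : ℤ) + (0 - 1) ∈ betaSet (a' j) (mu j) ↔ x ≤ M + 1 := by
      intro x
      have := hM (x - 1)
      have e3 : (x - 1) * (e : ℤ) + ((e : ℤ) - 1) = x * (e : ℤ) + (0 - 1) := by ring
      rw [e3] at this
      rw [this]; omega
    rw [delta_eq_s9 he a a' mu j (hd j) 0 L (M + 1) (by simpa using hL) hM']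
    have b1 := hl 0 (by omega) j
    have b2 := hl (e - 1) (by omega) j
    omega


end AK
end

section
/- Fix i ∈ {0,…,e−1}. Let μ be a multipartition lying in a core block C and let 0 ≤ h ≤ K_i(C). Let B be the block containing the multipartitions obtained from μ by adding h e-rim hooks. Then w(B) ≤ w(C) + K_i(C)·r; that is, the block B satisfies the Scopes-type condition w(B) ≤ w(C) + K_i r. -/
/-!
Combinatorial framework for multipartitions, residues, β-sets, abacus levels,
weights, hubs, core blocks and Scopes-type moves, following Fayers and the paper.
Rows and columns of Young diagrams are indexed from 0, so the node in row `b`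
and column `c` (0-based) of component `j` has residue `a j + c - b` mod `e`.
-/

open scoped Classical

namespace AK

theorem aux_ediv (e : ℤ) (he : 0 < e) (t i : ℤ) :
    (t - i) / e - (t - 1 - i) / e = if t % e = i % e then 1 else 0 := by
  have key : t % e = i % e ↔ (t - i) % e = 0 := by
    rw [Int.emod_eq_emod_iff_emod_sub_eq_zero]
  simp only [key]
  have h1 := Int.emod_add_mul_ediv (t - i) e
  have h2 := Int.emod_nonneg (t - i) he.ne'
  have h3 := Int.emod_lt_of_pos (t - i) he
  split_ifs with h
  · have : (t - 1 - i) / e = (t - i) / e - 1 := by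
      rw [Int.ediv_eq_iff_of_pos he]
      constructor <;> nlinarith
    omega
  · have : (t - 1 - i) / e = (t - i) / e := by
      rw [Int.ediv_eq_iff_of_pos he]
      have : 0 < (t - i) % e := by omega
      constructor <;> nlinarith
    omega

theorem aux_row (e : ℤ) (he : 0 < e) (s i : ℤ) (p : ℕ) :
    (∑ c ∈ Finset.range p, if (s + (c : ℤ)) % e = i % e then (1 : ℤ) else 0)
      = (s + p - 1 - i) / e - (s - 1 - i) / e := by
  induction p with
  | zero => simp
  | succ p ih =>
    rw [Finset.sum_range_succ, ih, ← aux_ediv e he (s + p) i]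
    push_cast
    rw [show s + ((p : ℤ) + 1) - 1 - i = s + p - i by ring]
    ring

theorem aux_row' (e : ℤ) (he : 0 < e) (s i : ℤ) (p M : ℕ) (hp : p ≤ M) :
    (∑ c ∈ Finset.range M, if (c < p ∧ (s + (c : ℤ)) % e = i % e) then (1 : ℤ) else 0)
      = (s + p - 1 - i) / e - (s - 1 - i) / e := by
  rw [← aux_row e he s i p, ← Finset.sum_subset (Finset.range_mono hp)]
  · apply Finset.sum_congr rfl
    intro c hc
    simp [Finset.mem_range.1 hc]
  · intro c _ hc
    rw [if_neg]
    rintro ⟨h, _⟩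
    exact hc (Finset.mem_range.2 h)

theorem aux_count {r : ℕ} (e : ℕ) (he : 0 < e) (a : Fin r → ℤ) (lam : Multipartition r)
    (i : ℤ) (N : ℕ) (hN : ∀ j, ∀ b, N ≤ b → (lam j).part b = 0) :
    (nodeCount e a lam i : ℤ) = ∑ j : Fin r, ∑ b ∈ Finset.range N,
      ((((lam j).part b : ℤ) + a j - ((b : ℤ) + 1) - i) / e - (a j - b - 1 - i) / e) := by
  set M : ℕ := ∑ j : Fin r, (lam j).part 0 with hM
  have hMb : ∀ j b, (lam j).part b ≤ M := fun j b =>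
    ((lam j).antitone (Nat.zero_le b)).trans
      (Finset.single_le_sum (f := fun j => (lam j).part 0) (fun _ _ => Nat.zero_le _)
        (Finset.mem_univ j))
  have hset : {x : Node r | (lam x.2.2).InDiag x.1 x.2.1 ∧
      (a x.2.2 + (x.2.1 : ℤ) - (x.1 : ℤ)) % (e : ℤ) = i % e} =
      (((Finset.range N ×ˢ (Finset.range M ×ˢ (Finset.univ : Finset (Fin r)))).filter
        (fun x : Node r => x.2.1 < (lam x.2.2).part x.1 ∧
      ((a x.2.2 - (x.1 : ℤ)) + (x.2.1 : ℤ)) % (e : ℤ) = i % e) : Finset (Node r)) :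
        Set (Node r)) := by
    ext ⟨b, c, j⟩
    simp only [PartitionFun.InDiag, Set.mem_setOf_eq, Finset.coe_filter, Finset.mem_product,
      Finset.mem_range, Finset.mem_univ, and_true]
    rw [show a j - (b : ℤ) + c = a j + c - b by ring]
    constructor
    · rintro ⟨h1, h2⟩
      refine ⟨⟨?_, h1.trans_le (hMb j b)⟩, h1, h2⟩
      by_contra hb
      rw [hN j b (not_lt.1 hb)] at h1
      omega
    · rintro ⟨_, h⟩
      exact h
  unfold nodeCount
  rw [hset, Set.ncard_coe_finset, Finset.card_filter, Finset.sum_product]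
  simp only [Finset.sum_product_right]
  rw [Finset.sum_comm]
  push_cast
  refine Finset.sum_congr rfl fun j _ => Finset.sum_congr rfl fun b _ => ?_
  rw [aux_row' (e : ℤ) (by exact_mod_cast he) (a j - b) i _ M (hMb j b)]
  congr 2
  ring

theorem aux_T (aj : ℤ) (lam : PartitionFun) (F : ℤ → ℤ) (N : ℕ)
    (hN : ∀ b, N ≤ b → lam.part b = 0) :
    ∃ T : Finset ℤ, (∀ y, y ∈ T ↔ y ∈ betaSet aj lam ∧ aj - N ≤ y) ∧
      ∑ b ∈ Finset.range N, F ((lam.part b : ℤ) + aj - ((b : ℤ) + 1)) = ∑ y ∈ T, F y := by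
  refine ⟨(Finset.range N).image fun b => (lam.part b : ℤ) + aj - ((b : ℤ) + 1), ?_, ?_⟩
  · intro y
    simp only [Finset.mem_image, Finset.mem_range, betaSet, Set.mem_setOf_eq]
    constructor
    · rintro ⟨b, hb, rfl⟩
      exact ⟨⟨b, rfl⟩, by omega⟩
    · rintro ⟨⟨b, rfl⟩, h⟩
      refine ⟨b, ?_, rfl⟩
      by_contra hb
      rw [hN b (not_lt.1 hb)] at h
      omega
  · rw [Finset.sum_image]
    intro b _ b' _ h
    simp only at h
    rcases lt_trichotomy b b' with hb | hb | hb
    · have := lam.antitone hb.le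
      omega
    · exact hb
    · have := lam.antitone hb.le
      omega

theorem aux_bound {r : ℕ} (lam : Multipartition r) :
    ∃ N, ∀ j, ∀ b, N ≤ b → (lam j).part b = 0 := by
  choose f hf using fun j => (lam j).finite_support
  refine ⟨∑ j, f j, fun j b hb => hf j b (le_trans ?_ hb)⟩
  exact Finset.single_le_sum (f := f) (fun _ _ => Nat.zero_le _) (Finset.mem_univ j)

theorem aux_hook {r : ℕ} (e : ℕ) (he : 0 < e) (a : Fin r → ℤ) (mu lam : Multipartition r)
    (h : AddRimHook e a mu lam) (i : ℤ) :
    nodeCount e a lam i = nodeCount e a mu i + 1 := by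
  obtain ⟨j, β, hβ, hβe, hj, hj'⟩ := h
  obtain ⟨N1, hN1⟩ := aux_bound mu
  obtain ⟨N2, hN2⟩ := aux_bound lam
  set N := N1 + N2 + (a j - β).toNat with hNdef
  have hmu : ∀ j, ∀ b, N ≤ b → (mu j).part b = 0 := fun j b hb => hN1 j b (by omega)
  have hlam : ∀ j, ∀ b, N ≤ b → (lam j).part b = 0 := fun j b hb => hN2 j b (by omega)
  have hNβ : a j - N ≤ β := by omega
  have he' : (0 : ℤ) < e := by exact_mod_cast he
  have main : (nodeCount e a lam i : ℤ) = nodeCount e a mu i + 1 := by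
    rw [aux_count e he a lam i N hlam, aux_count e he a mu i N hmu]
    simp only [Finset.sum_sub_distrib]
    rw [← Finset.add_sum_erase _ _ (Finset.mem_univ j),
      ← Finset.add_sum_erase _ (fun x => ∑ b ∈ Finset.range N,
        (((mu x).part b : ℤ) + a x - ((b : ℤ) + 1) - i) / (e : ℤ)) (Finset.mem_univ j)]
    have h1 : ∀ x ∈ Finset.univ.erase j, ∑ b ∈ Finset.range N,
        (((lam x).part b : ℤ) + a x - ((b : ℤ) + 1) - i) / (e : ℤ) =
        ∑ b ∈ Finset.range N, (((mu x).part b : ℤ) + a x - ((b : ℤ) + 1) - i) / (e : ℤ) := by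
      intro x hx
      obtain ⟨T, hT, hs⟩ := aux_T (a x) (lam x) (fun y => (y - i) / e) N (hlam x)
      obtain ⟨T', hT', hs'⟩ := aux_T (a x) (mu x) (fun y => (y - i) / e) N (hmu x)
      rw [hs, hs']
      have : T = T' := by
        ext y
        rw [hT, hT', hj' x (Finset.ne_of_mem_erase hx)]
      rw [this]
    rw [Finset.sum_congr rfl h1]
    have h2 : ∑ b ∈ Finset.range N,
        (((lam j).part b : ℤ) + a j - ((b : ℤ) + 1) - i) / (e : ℤ) =
        ∑ b ∈ Finset.range N, (((mu j).part b : ℤ) + a j - ((b : ℤ) + 1) - i) / (e : ℤ) + 1 := by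
      obtain ⟨T, hT, hs⟩ := aux_T (a j) (lam j) (fun y => (y - i) / e) N (hlam j)
      obtain ⟨T', hT', hs'⟩ := aux_T (a j) (mu j) (fun y => (y - i) / e) N (hmu j)
      rw [hs, hs']
      have hTT : T = insert (β + e) (T'.erase β) := by
        ext y
        rw [hT, hj, Finset.mem_insert, Finset.mem_erase, hT']
        simp only [Set.mem_insert_iff, Set.mem_diff, Set.mem_singleton_iff]
        constructor
        · rintro ⟨h | ⟨h, h'⟩, h3⟩
          · exact Or.inl h
          · exact Or.inr ⟨h', h, h3⟩
        · rintro (h | ⟨h', h, h3⟩)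
          · exact ⟨Or.inl h, by omega⟩
          · exact ⟨Or.inr ⟨h, h'⟩, h3⟩
      have hmem : β ∈ T' := (hT' β).2 ⟨hβ, hNβ⟩
      rw [hTT, Finset.sum_insert, ← Finset.add_sum_erase T' _ hmem]
      · rw [show β + (e : ℤ) - i = (β - i) + e by ring, Int.add_ediv_of_dvd_right (dvd_refl _),
          Int.ediv_self he'.ne']
        ring
      · intro hc
        exact hβe ((hT' _).1 (Finset.mem_of_mem_erase hc)).1
    rw [h2]
    ring
  exact_mod_cast main

theorem aux_weight {r : ℕ} (e : ℕ) (he : 0 < e) (a : Fin r → ℤ) (mu lam : Multipartition r)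
    (h : AddRimHook e a mu lam) : weight e a lam = weight e a mu + r := by
  unfold weight
  simp only [aux_hook e he a mu lam h]
  push_cast
  simp only [Finset.sum_add_distrib, add_sub_add_right_eq_sub]
  simp
  ring

/-- Theorem 5.2: fix `i ∈ {0,…,e−1}`, let `μ` lie in a core block
`C`, let `0 ≤ h ≤ K_i(C)` and let `λ` be obtained from `μ` by adding `h` `e`-rim
hooks. Then the block of `λ` satisfies `w(B) ≤ w(C) + K_i(C)·r`. -/
theorem stmt_12 {e r : ℕ} (he : 2 ≤ e) (hr : 0 < r) (a : Fin r → ℤ)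
    (i : ℕ) (hi : i < e)
    (mu : Multipartition r) (hmucore : IsMulticore e a mu)
    (hmumin : MinimalWeight e a mu)
    (h : ℕ) (hhK : (h : ℤ) ≤ Kconst e a mu i)
    (lam : Multipartition r)
    (hadd : ∃ seq : ℕ → Multipartition r, seq 0 = mu ∧ seq h = lam ∧
      ∀ t < h, AddRimHook e a (seq t) (seq (t + 1))) :
    weight e a lam ≤ weight e a mu + (Kconst e a mu i : ℚ) * (r : ℚ) := by
  obtain ⟨seq, h0, hh, hstep⟩ := hadd
  have key : ∀ t ≤ h, weight e a (seq t) = weight e a mu + (t : ℚ) * r := by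
    intro t
    induction t with
    | zero => intro _; rw [h0]; simp
    | succ t ih =>
      intro ht
      rw [aux_weight e (by omega) a _ _ (hstep t (by omega)), ih (by omega)]
      push_cast
      ring
  rw [← hh, key h le_rfl]
  have : (h : ℚ) ≤ (Kconst e a mu i : ℚ) := by exact_mod_cast hhK
  gcongr

end AK
end
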